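/- arXiv:1604.04765 — 5 statements merged into one kernel-verified Lean document; each statement's English description precedes it below -/
import Mathlib

section
/- Let U be a squared four-dimensional Bessel process started at 0 and τ₁^U := inf{ t ≥ 0 : Ū(t) − U(t) ≥ 1 } with Ū(t) := sup_{s ∈ [0,t]} U(s). There exists a constant c > 0 such that for all a ≥ 2, P{ τ₁^U > a } ≤ exp(−c a^{1/2}). -/
open MeasureTheory ProbabilityTheory Real Set Filter

noncomputable section

variable {Ω : Type*} [MeasurableSpace Ω]

/-- A standard one-dimensional Brownian motion (indexed by `ℝ`, with the relevant
properties required for nonnegative times): starts at `0`, has continuous paths,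
independent increments, and Gaussian increments of variance `t - s`. -/
structure IsStdBM (P : Measure Ω) (B : ℝ → Ω → ℝ) : Prop where
  measurable : ∀ t : ℝ, Measurable (B t)
  start : ∀ ω, B 0 ω = 0
  cont : ∀ ω, Continuous fun t => B t ω
  indep : ∀ (n : ℕ) (t : Fin (n + 1) → ℝ), (∀ i, 0 ≤ t i) → Monotone t →
    iIndepFun
      (fun (i : Fin n) ω => B (t i.succ) ω - B (t i.castSucc) ω) P
  gauss : ∀ s t : ℝ, 0 ≤ s → s ≤ t →
    P.map (fun ω => B t ω - B s ω) = gaussianReal 0 (Real.toNNReal (t - s))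

/-- A standard `d`-dimensional Brownian motion started at `0`: the coordinate
processes are independent standard one-dimensional Brownian motions. -/
structure IsStdBMVec (d : ℕ) (P : Measure Ω) (B : ℝ → Ω → EuclideanSpace ℝ (Fin d)) : Prop where
  coord : ∀ i : Fin d, IsStdBM P (fun t ω => B t ω i)
  indepCoord : iIndepFun
    (fun (i : Fin d) ω => fun t : ℝ => B t ω i) P

/-- Last zero of `W` in `[0,1]`. -/
def lastZero (W : ℝ → Ω → ℝ) (ω : Ω) : ℝ := sSup {t ∈ Icc (0:ℝ) 1 | W t ω = 0}

/-- `m` is a standard Brownian meander: obtained from a Brownian motion `W` by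
`m s = |W (g + s (1 - g))| / √(1 - g)`, where `g` is the last zero of `W` before time `1`. -/
def IsBrownianMeander (P : Measure Ω) (m : ℝ → Ω → ℝ) : Prop :=
  ∃ W : ℝ → Ω → ℝ, IsStdBM P W ∧
    ∀ ω, ∀ s ∈ Icc (0:ℝ) 1,
      m s ω = |W (lastZero W ω + s * (1 - lastZero W ω)) ω| / Real.sqrt (1 - lastZero W ω)

/-- Running maximum `X̄(t) = sup_{s ∈ [0,t]} X(s)`. -/
def runMax (X : ℝ → Ω → ℝ) (t : ℝ) (ω : Ω) : ℝ := ⨆ s : Icc (0:ℝ) t, X s ω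

/-- Maximal drawdown on `[0,T]` : `sup_{s ∈ [0,T]} (X̄(s) - X(s))`. -/
def maxDDOn (X : ℝ → Ω → ℝ) (T : ℝ) (ω : Ω) : ℝ := ⨆ s : Icc (0:ℝ) T, (runMax X s ω - X s ω)

/-- Drawdown time `τ_λ^X := inf {t ≥ 0 : X̄(t) - X(t) ≥ λ}`. -/
def ddTime (lam : ℝ) (X : ℝ → Ω → ℝ) (ω : Ω) : ℝ :=
  sInf {t | 0 ≤ t ∧ lam ≤ runMax X t ω - X t ω}

/-- Three-dimensional Bessel process built from a 3-dimensional Brownian motion. -/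
def bessel3 (β : ℝ → Ω → EuclideanSpace ℝ (Fin 3)) (t : ℝ) (ω : Ω) : ℝ := ‖β t ω‖

/-- Squared four-dimensional Bessel process built from a 4-dimensional Brownian motion. -/
def sqBessel4 (γ : ℝ → Ω → EuclideanSpace ℝ (Fin 4)) (t : ℝ) (ω : Ω) : ℝ := ‖γ t ω‖ ^ 2

end

open scoped ENNReal


/-! ### Target sets for the increments -/

/-- Target set for an increment: depends on the sign of `s` and on the step (`0` or `1`). -/
def ddTgt (s : ℝ) (b : ℕ) : Set ℝ :=
  if 0 ≤ s then (if b = 0 then Ioo 3 4 else Ioo (-2) (-1))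
  else (if b = 0 then Ioo (-4) (-3) else Ioo 1 2)

lemma ddTgt_measurable (b : ℕ) : MeasurableSet {p : ℝ × ℝ | p.2 ∈ ddTgt p.1 b} := by
  have : {p : ℝ × ℝ | p.2 ∈ ddTgt p.1 b} =
      (if b = 0 then (Ici 0 ×ˢ Ioo 3 4) ∪ (Iio 0 ×ˢ Ioo (-4) (-3))
        else (Ici 0 ×ˢ Ioo (-2) (-1)) ∪ (Iio 0 ×ˢ Ioo 1 2)) := by
    ext ⟨u, v⟩
    by_cases hu : 0 ≤ u <;> by_cases hb : b = 0 <;> simp [ddTgt, hu, hb, not_lt.2, not_le.1]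
  rw [this]
  split_ifs <;> measurability

lemma ddTgt_measurableSet (s : ℝ) (b : ℕ) : MeasurableSet (ddTgt s b) := by
  unfold ddTgt
  split_ifs <;> exact measurableSet_Ioo

lemma gaussian_Ioo_pos {u v : ℝ} (h : u < v) : 0 < gaussianReal 0 1 (Ioo u v) := by
  rw [pos_iff_ne_zero]
  intro h0
  have := gaussianReal_absolutelyContinuous' 0 (v := 1) one_ne_zero h0
  rw [Real.volume_Ioo, ENNReal.ofReal_eq_zero] at this
  linarith

lemma exists_ddTgt_lower : ∃ m : ℝ≥0∞, 0 < m ∧ ∀ s b, m ≤ gaussianReal 0 1 (ddTgt s b) := by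
  refine ⟨min (min (gaussianReal 0 1 (Ioo 3 4)) (gaussianReal 0 1 (Ioo (-2) (-1))))
    (min (gaussianReal 0 1 (Ioo (-4) (-3))) (gaussianReal 0 1 (Ioo 1 2))), ?_, ?_⟩
  · simp only [lt_min_iff]
    refine ⟨⟨?_, ?_⟩, ?_, ?_⟩ <;> apply gaussian_Ioo_pos <;> norm_num
  · intro s b
    unfold ddTgt
    split_ifs <;> simp

/-- One coordinate decreases its square. -/
lemma ddTgt_drop {s y z : ℝ} (hy : y ∈ ddTgt s 0) (hz : z ∈ ddTgt s 1) :
    1 ≤ (s + y) ^ 2 - (s + y + z) ^ 2 := by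
  unfold ddTgt at hy hz
  by_cases hs : 0 ≤ s
  · simp [hs] at hy hz
    nlinarith
  · simp [hs] at hy hz
    nlinarith

/-- The position after `2 n` steps. -/
def ddPos (x : Fin 4 × ℕ → ℝ) (n : ℕ) (i : Fin 4) : ℝ := ∑ j ∈ Finset.range (2 * n), x (i, j)

/-- The good event in block `n` (which forces a drawdown). -/
def ddGood (s : Fin 4 → ℝ) (y : Fin 4 → ℝ × ℝ) : Prop :=
  ∀ i, (y i).1 ∈ ddTgt (s i) 0 ∧ (y i).2 ∈ ddTgt (s i) 1

lemma ddGood_measurable :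
    MeasurableSet {p : (Fin 4 → ℝ) × (Fin 4 → ℝ × ℝ) | ddGood p.1 p.2} := by
  unfold ddGood
  simp only [setOf_forall, setOf_and]
  refine MeasurableSet.iInter fun i => MeasurableSet.inter ?_ ?_
  · exact (show Measurable fun p : (Fin 4 → ℝ) × (Fin 4 → ℝ × ℝ) => (p.1 i, (p.2 i).1) by
      fun_prop) (ddTgt_measurable 0)
  · exact (show Measurable fun p : (Fin 4 → ℝ) × (Fin 4 → ℝ × ℝ) => (p.1 i, (p.2 i).2) by
      fun_prop) (ddTgt_measurable 1)

/-- No good event in the first `n` blocks. -/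
def ddBad (n : ℕ) : Set (Fin 4 × ℕ → ℝ) :=
  {x | ∀ k < n, ¬ ddGood (ddPos x k) (fun i => (x (i, 2 * k), x (i, 2 * k + 1)))}

lemma ddPos_measurable (n : ℕ) : Measurable fun x => ddPos x n := by
  unfold ddPos
  fun_prop

lemma ddBad_measurable (n : ℕ) : MeasurableSet (ddBad n) := by
  unfold ddBad
  simp only [setOf_forall]
  refine MeasurableSet.iInter fun k => MeasurableSet.iInter fun _ => ?_
  exact ((((ddPos_measurable k).prodMk (by fun_prop)) :
    Measurable fun x : Fin 4 × ℕ → ℝ =>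
      (ddPos x k, fun i => (x (i, 2 * k), x (i, 2 * k + 1)))) ddGood_measurable).compl

/-- Truncation of the increments to the first `N` ones. -/
def ddTrunc (N : ℕ) (x : Fin 4 × ℕ → ℝ) : Fin 4 × ℕ → ℝ := fun p => if p.2 < N then x p else 0

lemma ddPos_trunc (n k : ℕ) (h : k ≤ n) (x) : ddPos (ddTrunc (2 * n) x) k = ddPos x k := by
  funext i
  unfold ddPos ddTrunc
  refine Finset.sum_congr rfl fun j hj => ?_
  rw [Finset.mem_range] at hj
  rw [if_pos]
  show j < 2 * n
  omega

lemma ddBad_trunc (n : ℕ) (x) : ddTrunc (2 * n) x ∈ ddBad n ↔ x ∈ ddBad n := by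
  unfold ddBad
  simp only [mem_setOf_eq]
  refine forall_congr' fun k => forall_congr' fun hk => ?_
  rw [ddPos_trunc n k hk.le]
  have h1 : 2 * k < 2 * n := by omega
  have h2 : 2 * k + 1 < 2 * n := by omega
  simp [ddTrunc, h1, h2]

/-- Conditioning lemma. -/
lemma indep_step {Ω E F : Type*} [MeasurableSpace Ω] [MeasurableSpace E] [MeasurableSpace F]
    (P : Measure Ω) [IsProbabilityMeasure P] {X : Ω → E} {Y : Ω → F}
    (hX : Measurable X) (hY : Measurable Y) (hXY : IndepFun X Y P)
    {S : Set E} (hS : MeasurableSet S) {T : Set (E × F)} (hT : MeasurableSet T) {q : ℝ≥0∞}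
    (hq : ∀ x, P {ω | (x, Y ω) ∈ T} ≤ q) :
    P {ω | X ω ∈ S ∧ (X ω, Y ω) ∈ T} ≤ q * P {ω | X ω ∈ S} := by
  have h := hXY.map_prod_eq_prod_map_map hX.aemeasurable hY.aemeasurable
  have hm : MeasurableSet (T ∩ (Prod.fst ⁻¹' S)) := hT.inter (measurable_fst hS)
  have : IsProbabilityMeasure (P.map Y) := Measure.isProbabilityMeasure_map hY.aemeasurable
  have e1 : P {ω | X ω ∈ S ∧ (X ω, Y ω) ∈ T} =
      P.map (fun ω => (X ω, Y ω)) (T ∩ (Prod.fst ⁻¹' S)) := by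
    rw [Measure.map_apply (hX.prodMk hY) hm]
    congr 1
    ext ω
    simp [and_comm]
  rw [e1, h, Measure.prod_apply hm]
  calc ∫⁻ x, P.map Y (Prod.mk x ⁻¹' (T ∩ Prod.fst ⁻¹' S)) ∂(P.map X)
      ≤ ∫⁻ x, S.indicator (fun _ => q) x ∂(P.map X) := by
        refine lintegral_mono fun x => ?_
        by_cases hx : x ∈ S
        · simp only [indicator_of_mem hx]
          refine le_trans (measure_mono (preimage_mono inter_subset_left)) ?_
          rw [Measure.map_apply hY (measurable_prodMk_left hT)]
          exact hq x
        · have : Prod.mk x ⁻¹' (T ∩ Prod.fst ⁻¹' S) = (∅ : Set F) := by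
            ext y; simp [hx]
          simp [this]
    _ = q * P {ω | X ω ∈ S} := by
        rw [lintegral_indicator_const hS, Measure.map_apply hX hS]; rfl

lemma block_prob {Ω : Type*} [MeasurableSpace Ω] (P : Measure Ω) [IsProbabilityMeasure P]
    (ξ : Fin 4 × ℕ → Ω → ℝ) (hm : ∀ p, Measurable (ξ p)) (hi : iIndepFun ξ P)
    (hg : ∀ p, P.map (ξ p) = gaussianReal 0 1) {m : ℝ≥0∞}
    (hlow : ∀ s b, m ≤ gaussianReal 0 1 (ddTgt s b)) (n : ℕ) (s : Fin 4 → ℝ) :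
    P {ω | ¬ ddGood s (fun i => (ξ (i, 2 * n) ω, ξ (i, 2 * n + 1) ω))} ≤ 1 - m ^ 8 := by
  have hY : Measurable fun ω => fun i : Fin 4 => (ξ (i, 2 * n) ω, ξ (i, 2 * n + 1) ω) := by
    fun_prop
  have hmeas : MeasurableSet {ω | ddGood s (fun i => (ξ (i, 2 * n) ω, ξ (i, 2 * n + 1) ω))} :=
    ((measurable_const (a := s)).prodMk hY) ddGood_measurable
  have := prob_compl_eq_one_sub (μ := P) hmeas
  rw [compl_setOf] at this
  rw [this]
  refine tsub_le_tsub_left ?_ 1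
  set I : Finset (Fin 4 × ℕ) := Finset.univ ×ˢ {2 * n, 2 * n + 1} with hI
  have key := hi.measure_inter_preimage_eq_mul I
    (sets := fun p => ddTgt (s p.1) (p.2 - 2 * n)) (fun p _ => ddTgt_measurableSet _ _)
  have hset : {ω | ddGood s (fun i => (ξ (i, 2 * n) ω, ξ (i, 2 * n + 1) ω))} =
      ⋂ p ∈ I, ξ p ⁻¹' ddTgt (s p.1) (p.2 - 2 * n) := by
    ext ω
    simp [ddGood, hI]
  rw [hset, key]
  have hc : I.card = 8 := by simp [hI]
  rw [← hc, ← Finset.prod_const]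
  refine Finset.prod_le_prod' fun p _ => ?_
  rw [← Measure.map_apply (hm p) (ddTgt_measurableSet _ _), hg p]
  exact hlow _ _

lemma ddBad_prob {Ω : Type*} [MeasurableSpace Ω] (P : Measure Ω) [IsProbabilityMeasure P]
    (ξ : Fin 4 × ℕ → Ω → ℝ) (hm : ∀ p, Measurable (ξ p)) (hi : iIndepFun ξ P)
    (hg : ∀ p, P.map (ξ p) = gaussianReal 0 1) {m : ℝ≥0∞}
    (hlow : ∀ s b, m ≤ gaussianReal 0 1 (ddTgt s b)) (n : ℕ) :
    P {ω | (fun p => ξ p ω) ∈ ddBad n} ≤ (1 - m ^ 8) ^ n := by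
  induction n with
  | zero => simpa using prob_le_one
  | succ n ih =>
    set X : Ω → (Fin 4 × ℕ → ℝ) := fun ω => ddTrunc (2 * n) (fun p => ξ p ω) with hXdef
    set Y : Ω → (Fin 4 → ℝ × ℝ) := fun ω i => (ξ (i, 2 * n) ω, ξ (i, 2 * n + 1) ω) with hYdef
    have hX : Measurable X := by
      refine measurable_pi_lambda _ fun p => ?_
      simp only [hXdef, ddTrunc]
      split_ifs
      · exact hm p
      · exact measurable_const
    have hY : Measurable Y := by fun_prop
    have hXY : IndepFun X Y P := by
      have h := hi.indepFun_finset (Finset.univ ×ˢ Finset.range (2 * n))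
        (Finset.univ ×ˢ {2 * n, 2 * n + 1}) (by
          rw [Finset.disjoint_left]
          rintro ⟨i, j⟩ h1 h2
          simp at h1 h2
          omega) hm
      refine h.comp
        (φ := fun u p => if hp : p ∈ (Finset.univ : Finset (Fin 4)) ×ˢ Finset.range (2 * n)
          then u ⟨p, hp⟩ else 0)
        (ψ := fun u i => (u ⟨(i, 2 * n), by simp⟩, u ⟨(i, 2 * n + 1), by simp⟩)) ?_ ?_ |>.congr ?_ ?_
      · refine measurable_pi_lambda _ fun p => ?_
        split_ifs
        · fun_prop
        · exact measurable_const
      · fun_prop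
      · refine Filter.Eventually.of_forall fun ω => ?_
        funext p
        simp [hXdef, ddTrunc]
      · exact Filter.Eventually.of_forall fun ω => rfl
    have hstep := indep_step P hX hY hXY (ddBad_measurable n)
      (T := {p | ¬ ddGood (ddPos p.1 n) p.2}) (q := 1 - m ^ 8)
      ((show Measurable fun p : (Fin 4 × ℕ → ℝ) × (Fin 4 → ℝ × ℝ) => (ddPos p.1 n, p.2) from
        ((ddPos_measurable n).comp measurable_fst).prodMk measurable_snd) ddGood_measurable).compl
      (fun x => block_prob P ξ hm hi hg hlow n (ddPos x n))
    have e : {ω | (fun p => ξ p ω) ∈ ddBad (n + 1)} ⊆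
        {ω | X ω ∈ ddBad n ∧ (X ω, Y ω) ∈ {p : (Fin 4 × ℕ → ℝ) × (Fin 4 → ℝ × ℝ) |
          ¬ ddGood (ddPos p.1 n) p.2}} := by
      intro ω hω
      refine ⟨(ddBad_trunc n _).2 fun k hk => hω k (by omega), ?_⟩
      show ¬ ddGood (ddPos (ddTrunc (2 * n) _) n) _
      rw [ddPos_trunc n n le_rfl]
      exact hω n (by omega)
    have e2 : {ω | X ω ∈ ddBad n} = {ω | (fun p => ξ p ω) ∈ ddBad n} := by
      ext ω
      exact ddBad_trunc n _
    rw [e2] at hstep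
    calc _ ≤ _ := measure_mono e
      _ ≤ _ := hstep
      _ ≤ (1 - m ^ 8) * (1 - m ^ 8) ^ n := by gcongr
      _ = _ := (pow_succ' _ _).symm

lemma incr_indep {Ω : Type*} [MeasurableSpace Ω] (P : Measure Ω) [IsProbabilityMeasure P]
    (γ : ℝ → Ω → EuclideanSpace ℝ (Fin 4)) (hγ : IsStdBMVec 4 P γ) :
    iIndepFun (fun (p : Fin 4 × ℕ) ω => γ (p.2 + 1 : ℝ) ω p.1 - γ (p.2 : ℝ) ω p.1) P := by
  refine iIndepFun_uncurry' (X := fun (i : Fin 4) (j : ℕ) ω => γ (j + 1 : ℝ) ω i - γ (j : ℝ) ω i)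
    (fun i j => ((hγ.coord i).measurable _).sub ((hγ.coord i).measurable _)) ?_ ?_
  · exact hγ.indepCoord.comp (fun _ u (j : ℕ) => u (j + 1 : ℝ) - u (j : ℝ))
      (fun _ => by fun_prop)
  · intro i
    rw [iIndepFun_iff_finset]
    intro s
    obtain ⟨N, hN⟩ : ∃ N, ∀ j ∈ s, j < N := ⟨s.sup id + 1, fun j hj =>
      Nat.lt_succ_of_le (Finset.le_sup (f := id) hj)⟩
    have h := (hγ.coord i).indep N (fun k => ((k : ℕ) : ℝ)) (fun _ => by positivity)
      (fun a b hab => Nat.cast_le.2 (Fin.le_def.1 hab))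
    have h2 := h.precomp (g := fun j : s => (⟨j, hN j j.2⟩ : Fin N))
      (fun a b hab => Subtype.ext (Fin.mk.inj_iff.1 hab))
    have h3 : iIndepFun (fun (j : s) ω => γ (((j : ℕ) : ℝ) + 1) ω i - γ ((j : ℕ) : ℝ) ω i) P := by
      simpa using h2
    exact h3

/-- there is `c > 0` such that `P{τ₁ > a} ≤ exp(-c a^{1/2})` for all `a ≥ 2`,
where `τ₁` is the unit drawdown time of a squared four-dimensional Bessel process started at `0`. -/
theorem sqBessel4_drawdown_time_tail
    {Ω : Type*} [MeasurableSpace Ω] (P : Measure Ω) [IsProbabilityMeasure P]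
    (γ : ℝ → Ω → EuclideanSpace ℝ (Fin 4)) (hγ : IsStdBMVec 4 P γ) :
    ∃ c : ℝ, 0 < c ∧ ∀ a : ℝ, 2 ≤ a →
      P {ω | a < ddTime 1 (sqBessel4 γ) ω}
        ≤ ENNReal.ofReal (Real.exp (-c * a ^ ((1:ℝ)/2))) := by
  obtain ⟨m, hm0, hlow⟩ := exists_ddTgt_lower
  set ξ : Fin 4 × ℕ → Ω → ℝ := fun p ω => γ (p.2 + 1 : ℝ) ω p.1 - γ (p.2 : ℝ) ω p.1 with hξ
  have hmeas : ∀ p, Measurable (ξ p) := fun p =>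
    ((hγ.coord p.1).measurable _).sub ((hγ.coord p.1).measurable _)
  have hg : ∀ p, P.map (ξ p) = gaussianReal 0 1 := by
    intro p
    have := (hγ.coord p.1).gauss (p.2 : ℝ) (p.2 + 1 : ℝ) (by positivity) (by linarith)
    simpa using this
  have hbad := ddBad_prob P ξ hmeas (incr_indep P γ hγ) hg hlow
  -- positions
  have hpos : ∀ ω i (n : ℕ), ∑ j ∈ Finset.range n, ξ (i, j) ω = γ (n : ℝ) ω i := by
    intro ω i n
    induction n with
    | zero => simpa using ((hγ.coord i).start ω).symm
    | succ n ih => rw [Finset.sum_range_succ, ih]; simp [hξ]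
  -- deterministic inclusion
  have hincl : ∀ (a : ℝ) (n : ℕ), 2 * (n : ℝ) ≤ a →
      {ω | a < ddTime 1 (sqBessel4 γ) ω} ⊆ {ω | (fun p => ξ p ω) ∈ ddBad n} := by
    intro a n hna ω hω k hk hgood
    have hk' : (k : ℝ) + 1 ≤ n := by exact_mod_cast hk
    have hcont : Continuous fun t => sqBessel4 γ t ω := by
      have : (fun t => sqBessel4 γ t ω) = fun t => ∑ i, (γ t ω i) ^ 2 := by
        funext t
        simp [sqBessel4, EuclideanSpace.norm_sq_eq]
      rw [this]
      exact continuous_finsetSum _ fun i _ => ((hγ.coord i).cont ω).pow 2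
    have hle : sqBessel4 γ (2 * k + 1) ω ≤ runMax (sqBessel4 γ) (2 * k + 2) ω := by
      unfold runMax
      refine le_ciSup (f := fun s : Icc (0:ℝ) (2 * k + 2) => sqBessel4 γ s ω) ?_
        ⟨(2 * k + 1 : ℝ), by positivity, by linarith⟩
      have := (isCompact_Icc (a := (0:ℝ)) (b := 2 * k + 2)).bddAbove_image hcont.continuousOn
      rwa [image_eq_range] at this
    have hdrop : 1 ≤ sqBessel4 γ (2 * k + 1) ω - sqBessel4 γ (2 * k + 2) ω := by
      simp only [sqBessel4, EuclideanSpace.norm_sq_eq, Real.norm_eq_abs, sq_abs]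
      rw [← Finset.sum_sub_distrib]
      have hone : ∀ i : Fin 4, 1 ≤ (γ (2 * k + 1 : ℝ) ω i) ^ 2 - (γ (2 * k + 2 : ℝ) ω i) ^ 2 := by
        intro i
        have hd := ddTgt_drop (hgood i).1 (hgood i).2
        have e0 : ddPos (fun p => ξ p ω) k i = γ (2 * k : ℝ) ω i := by
          unfold ddPos
          rw [hpos]
          push_cast
          rfl
        have e1 : (2 * (k : ℝ) + 1 + 1) = 2 * k + 2 := by ring
        simp only [e0] at hd
        simp only [hξ] at hd
        push_cast at hd
        rw [e1] at hd
        convert hd using 3 <;> ring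
      calc (1 : ℝ) ≤ ∑ _i : Fin 4, (1 : ℝ) := by simp
        _ ≤ _ := Finset.sum_le_sum fun i _ => hone i
    have : ddTime 1 (sqBessel4 γ) ω ≤ 2 * k + 2 := by
      unfold ddTime
      refine csInf_le ⟨0, fun t ht => ht.1⟩ ⟨by positivity, by linarith⟩
    have hω' : a < ddTime 1 (sqBessel4 γ) ω := hω
    linarith
  -- conclusion
  have hq1 : (1 - m ^ 8 : ℝ≥0∞) < 1 :=
    ENNReal.sub_lt_self ENNReal.one_ne_top one_ne_zero (pow_ne_zero 8 hm0.ne')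
  set r : ℝ := max (1 - m ^ 8 : ℝ≥0∞).toReal (1 / 2) with hr
  have hr0 : 0 < r := lt_of_lt_of_le (by norm_num) (le_max_right _ _)
  have hr1 : r < 1 := by
    refine max_lt ?_ (by norm_num)
    have := (ENNReal.toReal_lt_toReal hq1.ne_top ENNReal.one_ne_top).2 hq1
    simpa using this
  have hqr : (1 - m ^ 8 : ℝ≥0∞) ≤ ENNReal.ofReal r := by
    rw [← ENNReal.ofReal_toReal hq1.ne_top]
    exact ENNReal.ofReal_le_ofReal (le_max_left _ _)
  have hlog : Real.log r < 0 := Real.log_neg hr0 hr1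
  refine ⟨-Real.log r / 4, by linarith, fun a ha => ?_⟩
  set n : ℕ := ⌊a / 2⌋₊ with hn
  have hn1 : (n : ℝ) ≤ a / 2 := Nat.floor_le (by linarith)
  have hn2 : a / 2 < n + 1 := Nat.lt_floor_add_one _
  have hn3 : (1 : ℝ) ≤ n := by
    have : 1 ≤ n := Nat.le_floor (by push_cast; linarith)
    exact_mod_cast this
  have hsq : a ^ ((1:ℝ)/2) ≤ a := by
    calc a ^ ((1:ℝ)/2) ≤ a ^ (1:ℝ) :=
          Real.rpow_le_rpow_of_exponent_le (by linarith) (by norm_num)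
      _ = a := Real.rpow_one a
  calc P {ω | a < ddTime 1 (sqBessel4 γ) ω} ≤ _ := measure_mono (hincl a n (by linarith))
    _ ≤ _ := hbad n
    _ ≤ (ENNReal.ofReal r) ^ n := by gcongr
    _ = ENNReal.ofReal (r ^ n) := (ENNReal.ofReal_pow hr0.le n).symm
    _ ≤ _ := by
      refine ENNReal.ofReal_le_ofReal ?_
      have : r ^ n = Real.exp (n * Real.log r) := by
        rw [Real.exp_nat_mul, Real.exp_log hr0]
      rw [this]
      refine Real.exp_le_exp.2 ?_
      have h4 : a ^ ((1:ℝ)/2) / 4 ≤ n := by linarith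
      nlinarith
end

section
/- Let U be a squared four-dimensional Bessel process started at 0, τ₁^U := inf{ t ≥ 0 : Ū(t) − U(t) ≥ 1 } with Ū(t) := sup_{s ∈ [0,t]} U(s), and A(t) := ∫₀^t U(s) ds. There exists a constant c > 0 such that for all b ≥ 4, P{ A(τ₁^U) ≥ b } ≤ exp(−c b^{1/5}). -/
open MeasureTheory ProbabilityTheory Real Set Filter

open scoped ENNReal


section helpers

lemma aux_gauss_tail {Ω : Type*} [MeasurableSpace Ω] (P : Measure Ω) [IsProbabilityMeasure P]
    (X : Ω → ℝ) (hX : Measurable X) (v : ℝ) (hv : 0 < v)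
    (h : P.map X = gaussianReal 0 (Real.toNNReal v)) (a : ℝ) (ha : 0 ≤ a) :
    P {ω | a < |X ω|} ≤ ENNReal.ofReal (2 * Real.exp (-a ^ 2 / (2 * v))) := by
  have key : ∀ Y : Ω → ℝ, Measurable Y → P.map Y = gaussianReal 0 (Real.toNNReal v) →
      P {ω | a ≤ Y ω} ≤ ENNReal.ofReal (Real.exp (-a ^ 2 / (2 * v))) := by
    intro Y hY hmap
    have hs : HasSubgaussianMGF Y (Real.toNNReal v) P := by
      constructor
      · intro t
        have h1 := integrable_exp_mul_gaussianReal (μ := 0) (v := Real.toNNReal v) t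
        rw [← hmap] at h1
        exact (integrable_map_measure (by fun_prop) hY.aemeasurable).1 h1
      · intro t
        rw [mgf_gaussianReal hmap]
        simp
    have h2 := hs.measure_ge_le ha
    rw [Real.coe_toNNReal _ hv.le] at h2
    rw [← ofReal_measureReal]
    exact ENNReal.ofReal_le_ofReal h2
  have hneg : P.map (fun ω => - X ω) = gaussianReal 0 (Real.toNNReal v) := by
    have : (fun ω => - X ω) = (fun x : ℝ => -x) ∘ X := rfl
    rw [this, ← Measure.map_map measurable_neg hX, h, gaussianReal_map_neg]
    simp
  calc P {ω | a < |X ω|} ≤ P ({ω | a ≤ X ω} ∪ {ω | a ≤ - X ω}) := by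
        apply measure_mono
        intro ω hω
        simp only [mem_ofPred_eq] at hω
        rcases lt_abs.1 hω with h | h
        · left; exact h.le
        · right; exact h.le
    _ ≤ _ := measure_union_le _ _
    _ ≤ _ := add_le_add (key X hX h) (key _ hX.neg hneg)
    _ = _ := by rw [← ENNReal.ofReal_add (by positivity) (by positivity)]; congr 1; ring

lemma aux_gauss_lower (l u M : ℝ) (hl : -M ≤ l) (hu : u ≤ M) :
    ENNReal.ofReal ((u - l) * Real.exp (-2000 * M ^ 2)) ≤
      gaussianReal 0 (Real.toNNReal (1/4000)) (Icc l u) := by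
  have hv : Real.toNNReal (1/4000) ≠ 0 := by simp
  have hc : ((Real.toNNReal (1/4000) : NNReal) : ℝ) = 1/4000 := Real.coe_toNNReal _ (by norm_num)
  rw [gaussianReal_apply _ hv]
  calc ENNReal.ofReal ((u - l) * Real.exp (-2000 * M ^ 2))
      = ∫⁻ x in Icc l u, ENNReal.ofReal (Real.exp (-2000 * M ^ 2)) := by
        rw [setLIntegral_const, Real.volume_Icc, ← ENNReal.ofReal_mul (by positivity), mul_comm]
    _ ≤ _ := by
        apply setLIntegral_mono' measurableSet_Icc
        intro x hx
        rw [gaussianPDF]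
        apply ENNReal.ofReal_le_ofReal
        rw [gaussianPDFReal, hc]
        have hsq : √(2 * π * (1/4000)) ≤ 1 := by
          rw [Real.sqrt_le_left (by norm_num)]
          linarith [Real.pi_le_four]
        have hpos : 0 < √(2 * π * (1/4000)) := by positivity
        have h1 : 1 ≤ (√(2 * π * (1/4000)))⁻¹ := (one_le_inv₀ hpos).2 hsq
        have h2 : Real.exp (-2000 * M ^ 2) ≤ Real.exp (-(x - 0) ^ 2 / (2 * (1/4000))) := by
          apply Real.exp_le_exp.2
          have : x ^ 2 ≤ M ^ 2 := sq_le_sq' (by linarith [hx.1]) (by linarith [hx.2])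
          have e : -(x - 0) ^ 2 / (2 * (1/4000)) = -2000 * x ^ 2 := by ring
          rw [e]
          linarith
        calc _ ≤ 1 * Real.exp (-(x - 0) ^ 2 / (2 * (1/4000))) := by rw [one_mul]; exact h2
          _ ≤ _ := by gcongr

lemma aux_chain_path (f : ℝ → ℝ) (hf : Continuous f) (h0 : f 0 = 0) (T a : ℝ) (hT : 0 < T)
    (ha : 0 < a)
    (h : ∀ n k : ℕ, k < 2 ^ n → |f ((k + 1 : ℕ) * T / 2 ^ n) - f (k * T / 2 ^ n)|
      ≤ a / 4 * (3 / 4) ^ n) (t : ℝ) (ht : t ∈ Icc 0 T) : |f t| ≤ a := by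
  have claim : ∀ n k : ℕ, k ≤ 2 ^ n → |f (k * T / 2 ^ n)| ≤ a * (1 - (3 / 4) ^ (n + 1)) := by
    intro n
    induction n with
    | zero =>
      intro k hk
      have hk' : k = 0 ∨ k = 1 := by simp at hk; omega
      rcases hk' with rfl | rfl
      · simp [h0]; nlinarith
      · have := h 0 0 (by simp)
        simp [h0] at this ⊢
        linarith
    | succ n ih =>
      intro k hk
      have hp : (0:ℝ) ≤ (3 / 4) ^ (n + 1) := by positivity
      rcases Nat.even_or_odd' k with ⟨j, rfl | rfl⟩
      · have h1 := ih j (by rw [pow_succ] at hk; omega)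
        have e : ((2 * j : ℕ) : ℝ) * T / 2 ^ (n + 1) = j * T / 2 ^ n := by
          push_cast; rw [pow_succ]; field_simp
        rw [e]
        refine h1.trans ?_
        rw [pow_succ (3/4 : ℝ) (n + 1)]
        nlinarith [mul_nonneg ha.le hp]
      · have h1 := ih j (by rw [pow_succ] at hk; omega)
        have h2 := h (n + 1) (2 * j) (by omega)
        have e : ((2 * j : ℕ) : ℝ) * T / 2 ^ (n + 1) = j * T / 2 ^ n := by
          push_cast; rw [pow_succ]; field_simp
        rw [e] at h2
        have h3 := abs_add_le (f ((2 * j + 1 : ℕ) * T / 2 ^ (n + 1)) - f (j * T / 2 ^ n))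
          (f (j * T / 2 ^ n))
        rw [sub_add_cancel] at h3
        rw [pow_succ (3/4 : ℝ) (n + 1)]
        nlinarith [mul_nonneg ha.le hp]
  have claim2 : ∀ n k : ℕ, k ≤ 2 ^ n → |f (k * T / 2 ^ n)| ≤ a := fun n k hk =>
    (claim n k hk).trans (by
      have hp : (0:ℝ) ≤ (3 / 4) ^ (n + 1) := by positivity
      nlinarith)
  have hlim : Tendsto (fun n : ℕ => ((⌊t / T * 2 ^ n⌋₊ : ℕ) : ℝ) * T / 2 ^ n) atTop (nhds t) := by
    have h1 : Tendsto (fun n : ℕ => t - T * (1 / 2 : ℝ) ^ n) atTop (nhds t) := by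
      have := (tendsto_pow_atTop_nhds_zero_of_lt_one (r := (1/2 : ℝ)) (by norm_num)
        (by norm_num)).const_mul T
      simpa using this.const_sub t
    refine tendsto_of_tendsto_of_tendsto_of_le_of_le h1 tendsto_const_nhds ?_ ?_
    · intro n
      have h2 := (Nat.lt_floor_add_one (t / T * 2 ^ n)).le
      have hp : (0:ℝ) < 2 ^ n := by positivity
      show t - T * (1 / 2 : ℝ) ^ n ≤ _
      rw [le_div_iff₀ hp, sub_mul, mul_assoc, ← mul_pow]
      have h3 := mul_le_mul_of_nonneg_right h2 hT.le
      have : t / T * 2 ^ n * T = t * 2 ^ n := by field_simp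
      rw [this] at h3
      norm_num
      linarith
    · intro n
      have hp : (0:ℝ) < 2 ^ n := by positivity
      have h2 := Nat.floor_le (a := t / T * 2 ^ n) (by have := ht.1; positivity)
      have h3 := mul_le_mul_of_nonneg_right h2 hT.le
      have : t / T * 2 ^ n * T = t * 2 ^ n := by field_simp
      rw [this] at h3
      show _ ≤ t
      rw [div_le_iff₀ hp]
      exact h3
  have hl2 := ((hf.tendsto t).comp hlim).abs
  refine le_of_tendsto hl2 (Eventually.of_forall fun n => ?_)
  apply claim2
  apply Nat.floor_le_of_le
  push_cast
  have : t / T ≤ 1 := (div_le_one hT).2 ht.2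
  have hp : (0:ℝ) < 2 ^ n := by positivity
  nlinarith

lemma aux_sup_tail {Ω : Type*} [MeasurableSpace Ω] (P : Measure Ω) [IsProbabilityMeasure P]
    (B : ℝ → Ω → ℝ) (hB : IsStdBM P B) (T a : ℝ) (hT : 0 < T) (ha : 0 < a)
    (hy : 12 ≤ a ^ 2 / (32 * T)) :
    P {ω | ∃ t ∈ Icc 0 T, a < |B t ω|} ≤
      ENNReal.ofReal (4 * Real.exp (-(a ^ 2 / (32 * T)))) := by
  set y := a ^ 2 / (32 * T) with hydef
  have hsub : {ω | ∃ t ∈ Icc 0 T, a < |B t ω|} ⊆ ⋃ n : ℕ, ⋃ k ∈ Finset.range (2 ^ n),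
      {ω | a / 4 * (3 / 4) ^ n < |B ((k + 1 : ℕ) * T / 2 ^ n) ω - B (k * T / 2 ^ n) ω|} := by
    rintro ω ⟨t, ht, hlt⟩
    by_contra hcon
    simp only [mem_iUnion, mem_ofPred_eq, Finset.mem_range, not_exists, not_lt] at hcon
    exact absurd (aux_chain_path (fun t => B t ω) (hB.cont ω) (hB.start ω) T a hT ha
      (fun n k hk => hcon n k hk) t ht) (not_le.2 hlt)
  have hexp : Real.exp (-(3/2)) ≤ 1 / 4 := by
    rw [Real.exp_neg, one_div]
    apply inv_anti₀ (by norm_num)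
    have h1 := Real.quadratic_le_exp_of_nonneg (x := 3/4) (by norm_num)
    have h2 : Real.exp (3/2) = Real.exp (3/4) * Real.exp (3/4) := by
      rw [← Real.exp_add]; norm_num
    rw [h2]
    nlinarith
  have hn : ∀ n : ℕ, P (⋃ k ∈ Finset.range (2 ^ n),
      {ω | a / 4 * (3 / 4) ^ n < |B ((k + 1 : ℕ) * T / 2 ^ n) ω - B (k * T / 2 ^ n) ω|}) ≤
      ENNReal.ofReal (2 * Real.exp (-y) * (1 / 2) ^ n) := by
    intro n
    have hp : (0:ℝ) < 2 ^ n := by positivity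
    have hk : ∀ k ∈ Finset.range (2 ^ n),
        P {ω | a / 4 * (3 / 4) ^ n < |B ((k + 1 : ℕ) * T / 2 ^ n) ω - B (k * T / 2 ^ n) ω|} ≤
        ENNReal.ofReal (2 * Real.exp (-y) * (1 / 4) ^ n) := by
      intro k _
      have hg := hB.gauss (k * T / 2 ^ n) ((k + 1 : ℕ) * T / 2 ^ n) (by positivity)
        (by gcongr; simp)
      have e : ((k + 1 : ℕ) : ℝ) * T / 2 ^ n - k * T / 2 ^ n = T / 2 ^ n := by
        push_cast; ring
      rw [e] at hg
      refine (aux_gauss_tail P _ ((hB.measurable _).sub (hB.measurable _)) (T / 2 ^ n)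
        (by positivity) hg (a / 4 * (3 / 4) ^ n) (by positivity)).trans ?_
      apply ENNReal.ofReal_le_ofReal
      rw [mul_assoc]
      gcongr
      have e2 : -(a / 4 * (3 / 4) ^ n) ^ 2 / (2 * (T / 2 ^ n)) = - (y * (9 / 8) ^ n) := by
        rw [hydef]
        have : ((9 / 8 : ℝ)) ^ n = (3 / 4) ^ n * (3 / 4) ^ n * 2 ^ n := by
          rw [← mul_pow, ← mul_pow]; norm_num
        rw [this]
        field_simp
        ring
      rw [e2]
      have hb : 1 + (n : ℝ) * (1 / 8) ≤ (9 / 8) ^ n := by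
        have := one_add_mul_le_pow (a := (1/8 : ℝ)) (by norm_num) n
        norm_num at this ⊢
        linarith
      have h3 : Real.exp (-(y * (9 / 8) ^ n)) ≤ Real.exp (-y + n * (-(3/2))) := by
        apply Real.exp_le_exp.2
        have h4 := mul_le_mul_of_nonneg_left hb (by linarith : 0 ≤ y)
        have h5 := mul_le_mul_of_nonneg_right hy (by positivity : 0 ≤ (n : ℝ) * (1 / 8))
        linarith
      refine h3.trans ?_
      rw [Real.exp_add, Real.exp_nat_mul]
      gcongr
    refine (measure_biUnion_finset_le _ _).trans ((Finset.sum_le_sum hk).trans ?_)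
    rw [Finset.sum_const, Finset.card_range, nsmul_eq_mul]
    have : ((2 ^ n : ℕ) : ENNReal) = ENNReal.ofReal (2 ^ n) := by
      rw [ENNReal.ofReal_pow (by norm_num)]; simp
    rw [this, ← ENNReal.ofReal_mul hp.le]
    apply ENNReal.ofReal_le_ofReal
    have : (1 / 2 : ℝ) ^ n = 2 ^ n * (1 / 4) ^ n := by rw [← mul_pow]; norm_num
    rw [this]
    apply le_of_eq; ring
  refine (measure_mono hsub).trans ((measure_iUnion_le _).trans ((ENNReal.tsum_le_tsum hn).trans ?_))
  have hs : HasSum (fun n : ℕ => 2 * Real.exp (-y) * (1 / 2 : ℝ) ^ n) (2 * Real.exp (-y) * 2) :=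
    hasSum_geometric_two.mul_left _
  rw [← ENNReal.ofReal_tsum_of_nonneg (fun n => by positivity) hs.summable, hs.tsum_eq]
  apply ENNReal.ofReal_le_ofReal
  linarith

lemma aux_indep_nat {Ω : Type*} [MeasurableSpace Ω] (P : Measure Ω)
    (B : ℝ → Ω → ℝ) (hB : IsStdBM P B) (δ : ℝ) (hδ : 0 ≤ δ) :
    iIndepFun (fun (k : ℕ) ω => B ((k + 1 : ℕ) * δ) ω - B (k * δ) ω) P := by
  rw [iIndepFun_iff_finset]
  intro s
  obtain ⟨N, hN⟩ : ∃ N, ∀ k ∈ s, k < N := by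
    refine ⟨s.sup id + 1, fun k hk => ?_⟩
    have : id k ≤ s.sup id := Finset.le_sup hk
    simp only [id] at this
    omega
  have h := hB.indep N (fun i => (i : ℕ) * δ) (fun i => by positivity)
    (fun i j hij => by
      have : ((i : ℕ) : ℝ) ≤ (j : ℕ) := by exact_mod_cast hij
      exact mul_le_mul_of_nonneg_right this hδ)
  have h2 := h.precomp (g := fun k : s => (⟨k.1, hN k.1 k.2⟩ : Fin N)) (by
    intro x y hxy
    exact Subtype.ext (congrArg Fin.val hxy))
  exact h2

lemma aux_indep_all {Ω : Type*} [MeasurableSpace Ω] (P : Measure Ω) [IsProbabilityMeasure P]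
    (γ : ℝ → Ω → EuclideanSpace ℝ (Fin 4)) (hγ : IsStdBMVec 4 P γ) (δ : ℝ) (hδ : 0 ≤ δ) :
    iIndepFun (fun (p : Fin 4 × ℕ) ω => γ ((p.2 + 1 : ℕ) * δ) ω p.1 - γ (p.2 * δ) ω p.1) P := by
  refine iIndepFun_uncurry' (X := fun (i : Fin 4) (k : ℕ) ω =>
    γ ((k + 1 : ℕ) * δ) ω i - γ (k * δ) ω i) ?_ ?_ ?_
  · intro i k
    exact ((hγ.coord i).measurable _).sub ((hγ.coord i).measurable _)
  · exact hγ.indepCoord.comp (fun _ (f : ℝ → ℝ) (k : ℕ) => f ((k + 1 : ℕ) * δ) - f (k * δ))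
      (fun i => by fun_prop)
  · intro i
    exact aux_indep_nat P _ (hγ.coord i) δ hδ

/-- target sets of the first increment -/
def auxA : Bool → Set ℝ
  | true => Icc 1 2
  | false => Icc (-2) (-1)

/-- target sets of the second increment -/
def auxA' : Bool → Set ℝ
  | true => Icc (-1) (-1/2)
  | false => Icc (1/2) 1

lemma aux_drop (x d d' : ℝ) (h1 : d ∈ auxA (decide (0 ≤ x))) (h2 : d' ∈ auxA' (decide (0 ≤ x))) :
    1 / 4 ≤ (x + d) ^ 2 - (x + d + d') ^ 2 := by
  by_cases hx : 0 ≤ x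
  · simp only [hx, decide_true, auxA, auxA', mem_Icc] at h1 h2
    nlinarith [mul_nonneg (by linarith : 0 ≤ x + d - 1) (by linarith : 0 ≤ -d' - 1/2)]
  · simp only [hx, decide_false, auxA, auxA', mem_Icc] at h1 h2
    nlinarith [mul_nonneg (by linarith : 0 ≤ -(x + d) - 1) (by linarith : 0 ≤ d' - 1/2)]

lemma auxA_meas (s : Bool) : MeasurableSet (auxA s) := by cases s <;> exact measurableSet_Icc
lemma auxA'_meas (s : Bool) : MeasurableSet (auxA' s) := by cases s <;> exact measurableSet_Icc

lemma auxA_lower (s : Bool) : ENNReal.ofReal (Real.exp (-8000)) ≤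
    gaussianReal 0 (Real.toNNReal (1/4000)) (auxA s) := by
  cases s
  · have := aux_gauss_lower (-2) (-1) 2 (by norm_num) (by norm_num)
    norm_num at this ⊢
    exact this
  · have := aux_gauss_lower 1 2 2 (by norm_num) (by norm_num)
    norm_num at this ⊢
    exact this

lemma auxA'_lower (s : Bool) : ENNReal.ofReal (1 / 2 * Real.exp (-2000)) ≤
    gaussianReal 0 (Real.toNNReal (1/4000)) (auxA' s) := by
  cases s
  · have := aux_gauss_lower (1/2) 1 1 (by norm_num) (by norm_num)
    refine le_trans (le_of_eq ?_) this
    norm_num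
  · have := aux_gauss_lower (-1) (-1/2) 1 (by norm_num) (by norm_num)
    refine le_trans (le_of_eq ?_) this
    norm_num

/-- the one-round success probability -/
noncomputable def auxp : ℝ := Real.exp (-40000) / 16

/-- no drop of size one along the grid during the first `n` rounds -/
def auxG {Ω : Type*} (γ : ℝ → Ω → EuclideanSpace ℝ (Fin 4)) (n : ℕ) : Set Ω :=
  {ω | ∀ k < n, sqBessel4 γ ((2 * k + 1 : ℕ) * (1/4000)) ω
      - sqBessel4 γ ((2 * k + 2 : ℕ) * (1/4000)) ω < 1}

lemma aux_sq_eq {Ω : Type*} (γ : ℝ → Ω → EuclideanSpace ℝ (Fin 4)) (t : ℝ) (ω : Ω) :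
    sqBessel4 γ t ω = ∑ i, (γ t ω i) ^ 2 := by
  rw [sqBessel4, EuclideanSpace.real_norm_sq_eq]

/-- sigma-algebra generated by the variables with index in `S` -/
@[reducible] def auxSig {Ω : Type*} (Z : Fin 4 × ℕ → Ω → ℝ) (S : Set (Fin 4 × ℕ)) : MeasurableSpace Ω :=
  ⨆ p ∈ S, MeasurableSpace.comap (Z p) (borel ℝ)

lemma auxSig_le {Ω : Type*} (Z : Fin 4 × ℕ → Ω → ℝ) (S : Set (Fin 4 × ℕ)) (p : Fin 4 × ℕ)
    (hp : p ∈ S) : MeasurableSpace.comap (Z p) (borel ℝ) ≤ auxSig Z S :=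
  le_iSup₂_of_le (f := fun p (_ : p ∈ S) => MeasurableSpace.comap (Z p) (borel ℝ)) p hp le_rfl

lemma aux_step {Ω : Type*} [MeasurableSpace Ω] (P : Measure Ω) [IsProbabilityMeasure P]
    (γ : ℝ → Ω → EuclideanSpace ℝ (Fin 4)) (hγ : IsStdBMVec 4 P γ) (n : ℕ) :
    P (auxG γ (n + 1)) ≤ P (auxG γ n) * ENNReal.ofReal (1 - auxp) := by
  set Z : Fin 4 × ℕ → Ω → ℝ := fun p ω =>
    γ ((p.2 + 1 : ℕ) * (1/4000)) ω p.1 - γ (p.2 * (1/4000)) ω p.1 with hZ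
  have hZm : ∀ p, Measurable (Z p) := fun p =>
    ((hγ.coord p.1).measurable _).sub ((hγ.coord p.1).measurable _)
  have hind : iIndepFun Z P := aux_indep_all P γ hγ (1/4000) (by norm_num)
  have hlaw : ∀ p, P.map (Z p) = gaussianReal 0 (Real.toNNReal (1/4000)) := by
    intro p
    have := (hγ.coord p.1).gauss (p.2 * (1/4000)) ((p.2 + 1 : ℕ) * (1/4000)) (by positivity)
      (by gcongr; simp)
    rw [hZ]
    simp only
    rw [this]
    congr 2
    push_cast; ring
  have hI : Indep (auxSig Z {p | p.2 < 2 * n}) (auxSig Z {p | 2 * n ≤ p.2}) P := by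
    apply indep_iSup_of_disjoint (fun p => (hZm p).comap_le) hind.iIndep
    rw [Set.disjoint_left]
    intro p h1 h2
    simp only [mem_ofPred_eq] at h1 h2
    omega
  have hW : ∀ (i : Fin 4) (k : ℕ), k ≤ 2 * n →
      Measurable[auxSig Z {p | p.2 < 2 * n}] (fun ω => γ (k * (1/4000)) ω i) := by
    intro i k
    induction k with
    | zero =>
      intro _
      have : (fun ω => γ ((0 : ℕ) * (1/4000)) ω i) = fun _ => 0 := by
        ext ω
        simpa using (hγ.coord i).start ω
      rw [this]
      exact measurable_const
    | succ k ih =>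
      intro hk
      have h1 := ih (by omega)
      have h2 : Measurable[auxSig Z {p | p.2 < 2 * n}] (Z (i, k)) := by
        apply Measurable.of_comap_le
        exact auxSig_le Z _ (i, k) (by simp only [mem_ofPred_eq]; omega)
      have : (fun ω => γ ((k + 1 : ℕ) * (1/4000)) ω i) =
          fun ω => γ (k * (1/4000)) ω i + Z (i, k) ω := by
        ext ω; simp [hZ]
      rw [this]
      exact h1.add h2
  have hpast_le : ∀ A, MeasurableSet[auxSig Z {p | p.2 < 2 * n}] A → MeasurableSet A := by
    have : auxSig Z {p | p.2 < 2 * n} ≤ (by assumption : MeasurableSpace Ω) :=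
      iSup₂_le fun p _ => (hZm p).comap_le
    exact this
  have hGm : MeasurableSet[auxSig Z {p | p.2 < 2 * n}] (auxG γ n) := by
    have : auxG γ n = ⋂ k ∈ Finset.range n, {ω | sqBessel4 γ ((2 * k + 1 : ℕ) * (1/4000)) ω
      - sqBessel4 γ ((2 * k + 2 : ℕ) * (1/4000)) ω < 1} := by
      ext ω; simp [auxG]
    rw [this]
    refine Finset.measurableSet_biInter _ fun k hk => ?_
    have hk' := Finset.mem_range.1 hk
    simp only [aux_sq_eq]
    refine measurableSet_lt (Measurable.sub ?_ ?_) measurable_const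
    · exact Finset.measurable_sum _ fun i _ => (hW i _ (by omega)).pow_const 2
    · exact Finset.measurable_sum _ fun i _ => (hW i _ (by omega)).pow_const 2
  set σ : Ω → (Fin 4 → Bool) := fun ω i => decide (0 ≤ γ ((2 * n : ℕ) * (1/4000)) ω i) with hσ
  have hσm : ∀ s, MeasurableSet[auxSig Z {p | p.2 < 2 * n}] (σ ⁻¹' {s}) := by
    intro s
    have : σ ⁻¹' {s} = ⋂ i, {ω | decide (0 ≤ γ ((2 * n : ℕ) * (1/4000)) ω i) = s i} := by
      ext ω
      simp [hσ, funext_iff]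
    rw [this]
    refine MeasurableSet.iInter fun i => ?_
    have h0 : MeasurableSet[auxSig Z {p | p.2 < 2 * n}] {ω | 0 ≤ γ ((2 * n : ℕ) * (1/4000)) ω i} :=
      measurableSet_le measurable_const (hW i _ le_rfl)
    cases s i
    · simpa [Set.compl_def] using h0.compl
    · simpa using h0
  set C : (Fin 4 → Bool) → Fin 4 × ℕ → Set ℝ := fun s p =>
    if p.2 = 2 * n then auxA (s p.1) else auxA' (s p.1) with hC
  have hCm : ∀ s p, MeasurableSet (C s p) := by
    intro s p
    simp only [hC]
    split_ifs
    · exact auxA_meas _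
    · exact auxA'_meas _
  set J : Finset (Fin 4 × ℕ) := Finset.univ ×ˢ {2 * n, 2 * n + 1} with hJ
  set E : (Fin 4 → Bool) → Set Ω := fun s => ⋂ p ∈ J, Z p ⁻¹' C s p with hE
  have hEfut : ∀ s, MeasurableSet[auxSig Z {p | 2 * n ≤ p.2}] (E s) := by
    intro s
    refine Finset.measurableSet_biInter _ fun p hp => ?_
    have hle := auxSig_le Z {p | 2 * n ≤ p.2} p (by
            simp [hJ] at hp
            simp only [mem_ofPred_eq]; omega)
    exact hle _ ⟨_, by rw [← BorelSpace.measurable_eq (α := ℝ)]; exact hCm s p, rfl⟩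
  have hEm : ∀ s, MeasurableSet (E s) := fun s =>
    Finset.measurableSet_biInter _ fun p _ => hZm p (hCm s p)
  have hEP : ∀ s, ENNReal.ofReal auxp ≤ P (E s) := by
    intro s
    have h1 : P (E s) = ∏ p ∈ J, P (Z p ⁻¹' C s p) :=
      hind.meas_biInter fun p _ => ⟨_, hCm s p, rfl⟩
    have h2 : ∀ p, P (Z p ⁻¹' C s p) = gaussianReal 0 (Real.toNNReal (1/4000)) (C s p) := by
      intro p
      rw [← hlaw p, Measure.map_apply (hZm p) (hCm s p)]
    rw [h1]
    simp only [h2]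
    rw [hJ, Finset.prod_product]
    have h3 : ∀ i ∈ (Finset.univ : Finset (Fin 4)),
        ENNReal.ofReal (Real.exp (-8000)) * ENNReal.ofReal (1 / 2 * Real.exp (-2000)) ≤
        ∏ k ∈ ({2 * n, 2 * n + 1} : Finset ℕ),
          gaussianReal 0 (Real.toNNReal (1/4000)) (C s (i, k)) := by
      intro i _
      rw [Finset.prod_pair (by omega)]
      simp only [hC, if_true, Nat.succ_ne_self, if_false]
      exact mul_le_mul' (auxA_lower _) (auxA'_lower _)
    refine le_trans (le_of_eq ?_) (Finset.prod_le_prod' h3)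
    rw [Finset.prod_const, Finset.card_univ, Fintype.card_fin,
      ← ENNReal.ofReal_mul (by positivity), ← ENNReal.ofReal_pow (by positivity)]
    congr 1
    rw [auxp]
    have : Real.exp (-40000) = Real.exp (-8000) ^ 4 * Real.exp (-2000) ^ 4 := by
      rw [← Real.exp_nat_mul, ← Real.exp_nat_mul, ← Real.exp_add]; norm_num
    rw [this]; ring
  have hEc : ∀ s, P (E s)ᶜ ≤ ENNReal.ofReal (1 - auxp) := by
    intro s
    rw [prob_compl_eq_one_sub (hEm s), ENNReal.ofReal_sub _ (by rw [auxp]; positivity),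
      ENNReal.ofReal_one]
    exact tsub_le_tsub_left (hEP s) _
  have hsub : auxG γ (n + 1) ⊆ ⋃ s ∈ (Finset.univ : Finset (Fin 4 → Bool)),
      ((auxG γ n ∩ σ ⁻¹' {s}) ∩ (E s)ᶜ) := by
    intro ω hω
    simp only [mem_iUnion]
    refine ⟨σ ω, Finset.mem_univ _, ⟨fun k hk => hω k (by omega), rfl⟩, ?_⟩
    intro hmem
    have hlt := hω n (by omega)
    have hcoord : ∀ i : Fin 4, 1 / 4 ≤ (γ ((2 * n + 1 : ℕ) * (1/4000)) ω i) ^ 2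
        - (γ ((2 * n + 2 : ℕ) * (1/4000)) ω i) ^ 2 := by
      intro i
      have hm1 : Z (i, 2 * n) ω ∈ C (σ ω) (i, 2 * n) := by
        have := mem_iInter₂.1 hmem (i, 2 * n) (by simp [hJ])
        exact this
      have hm2 : Z (i, 2 * n + 1) ω ∈ C (σ ω) (i, 2 * n + 1) := by
        have := mem_iInter₂.1 hmem (i, 2 * n + 1) (by simp [hJ])
        exact this
      simp only [hC, if_true, Nat.succ_ne_self, if_false] at hm1 hm2
      have := aux_drop (γ ((2 * n : ℕ) * (1/4000)) ω i) _ _ hm1 hm2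
      have e1 : γ ((2 * n : ℕ) * (1/4000)) ω i + Z (i, 2 * n) ω
          = γ ((2 * n + 1 : ℕ) * (1/4000)) ω i := by simp only [hZ]; ring
      have e2 : γ ((2 * n + 1 : ℕ) * (1/4000)) ω i + Z (i, 2 * n + 1) ω
          = γ ((2 * n + 2 : ℕ) * (1/4000)) ω i := by simp only [hZ]; ring
      rw [e1, e2] at this
      exact this
    rw [aux_sq_eq, aux_sq_eq, ← Finset.sum_sub_distrib] at hlt
    have := Finset.sum_le_sum fun i (_ : i ∈ (Finset.univ : Finset (Fin 4))) => hcoord i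
    simp only [Finset.sum_const, Finset.card_univ, Fintype.card_fin] at this
    have h4 : (4 : ℕ) • (1 / 4 : ℝ) = 1 := by norm_num
    rw [h4] at this
    linarith
  calc P (auxG γ (n + 1)) ≤ ∑ s, P ((auxG γ n ∩ σ ⁻¹' {s}) ∩ (E s)ᶜ) :=
        (measure_mono hsub).trans (measure_biUnion_finset_le _ _)
    _ = ∑ s, P (auxG γ n ∩ σ ⁻¹' {s}) * P (E s)ᶜ := by
        refine Finset.sum_congr rfl fun s _ => ?_
        exact (Indep_iff _ _ _).1 hI _ _ (hGm.inter (hσm s)) (hEfut s).compl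
    _ ≤ ∑ s, P (auxG γ n ∩ σ ⁻¹' {s}) * ENNReal.ofReal (1 - auxp) :=
        Finset.sum_le_sum fun s _ => by gcongr; exact hEc s
    _ = (∑ s, P (auxG γ n ∩ σ ⁻¹' {s})) * ENNReal.ofReal (1 - auxp) := by
        rw [Finset.sum_mul]
    _ = _ := by
        congr 1
        rw [← measure_biUnion_finset]
        · congr 1
          ext ω
          simp
        · intro s _ s' _ hne
          refine Disjoint.mono inter_subset_right inter_subset_right ?_
          rw [Set.disjoint_left]
          intro ω h1 h2
          exact hne ((mem_preimage.1 h1).symm.trans (mem_preimage.1 h2))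
        · intro s _
          exact hpast_le _ (hGm.inter (hσm s))

lemma aux_G_le {Ω : Type*} [MeasurableSpace Ω] (P : Measure Ω) [IsProbabilityMeasure P]
    (γ : ℝ → Ω → EuclideanSpace ℝ (Fin 4)) (hγ : IsStdBMVec 4 P γ) (n : ℕ) :
    P (auxG γ n) ≤ ENNReal.ofReal ((1 - auxp) ^ n) := by
  have hp : 0 ≤ 1 - auxp := by
    have : Real.exp (-40000) ≤ 1 := Real.exp_le_one_iff.2 (by norm_num)
    rw [auxp]; linarith
  induction n with
  | zero => simpa using prob_le_one
  | succ n ih =>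
    refine (aux_step P γ hγ n).trans ?_
    rw [pow_succ, ENNReal.ofReal_mul (by positivity)]
    gcongr

lemma aux_dd_le {Ω : Type*} (X : ℝ → Ω → ℝ) (ω : Ω) (hX : Continuous fun t => X t ω)
    (s t : ℝ) (hs : 0 ≤ s) (hst : s ≤ t) (h : 1 ≤ X s ω - X t ω) :
    0 ≤ ddTime 1 X ω ∧ ddTime 1 X ω ≤ t := by
  constructor
  · exact Real.sInf_nonneg fun x hx => hx.1
  · refine csInf_le ⟨0, fun x hx => hx.1⟩ ⟨hs.trans hst, ?_⟩
    have hb : BddAbove (Set.range fun u : Icc (0:ℝ) t => X u ω) := by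
      have := (isCompact_Icc (a := (0:ℝ)) (b := t)).bddAbove_image hX.continuousOn
      refine this.mono ?_
      rintro _ ⟨u, rfl⟩
      exact ⟨u, u.2, rfl⟩
    have h1 : X s ω ≤ runMax X t ω := le_ciSup hb ⟨s, hs, hst⟩
    linarith

lemma aux_main {Ω : Type*} [MeasurableSpace Ω] (P : Measure Ω) [IsProbabilityMeasure P]
    (γ : ℝ → Ω → EuclideanSpace ℝ (Fin 4)) (hγ : IsStdBMVec 4 P γ) (n : ℕ) (hn : 1 ≤ n)
    (b : ℝ) (hb : 4 ≤ b) (hy : 12 ≤ 15625 * b / (n : ℝ) ^ 2) :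
    P {ω | b ≤ ∫ s in (0:ℝ)..(ddTime 1 (sqBessel4 γ) ω), sqBessel4 γ s ω}
      ≤ ENNReal.ofReal ((1 - auxp) ^ n + 16 * Real.exp (-(15625 * b / (n : ℝ) ^ 2))) := by
  have hn' : (0:ℝ) < n := by exact_mod_cast hn
  have hp : 0 ≤ 1 - auxp := by
    have : Real.exp (-40000) ≤ 1 := Real.exp_le_one_iff.2 (by norm_num)
    rw [auxp]; linarith
  set T : ℝ := n / 2000 with hT
  have hTpos : 0 < T := by positivity
  set a : ℝ := √(b / (8 * T)) with ha
  have hapos : 0 < a := Real.sqrt_pos.2 (by positivity)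
  have hasq : a ^ 2 = b / (8 * T) := Real.sq_sqrt (by positivity)
  have hyeq : a ^ 2 / (32 * T) = 15625 * b / (n : ℝ) ^ 2 := by
    rw [hasq, hT]; field_simp; norm_num
  have hsub : {ω | b ≤ ∫ s in (0:ℝ)..(ddTime 1 (sqBessel4 γ) ω), sqBessel4 γ s ω} ⊆
      auxG γ n ∪ ⋃ i ∈ (Finset.univ : Finset (Fin 4)), {ω | ∃ t ∈ Icc 0 T, a < |γ t ω i|} := by
    intro ω hω
    by_contra hcon
    simp only [mem_union, not_or, mem_iUnion, Finset.mem_univ, exists_prop, true_and,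
      not_exists] at hcon
    obtain ⟨h1, h2⟩ := hcon
    have h2' : ∀ i : Fin 4, ∀ t ∈ Icc 0 T, |γ t ω i| ≤ a := by
      intro i t ht
      by_contra hlt
      exact h2 i ⟨t, ht, not_le.1 hlt⟩
    have hU : ∀ t ∈ Icc 0 T, sqBessel4 γ t ω ≤ 4 * a ^ 2 := by
      intro t ht
      rw [aux_sq_eq]
      calc ∑ i, (γ t ω i) ^ 2 ≤ ∑ i : Fin 4, a ^ 2 := Finset.sum_le_sum fun i _ => by
            rw [← sq_abs]
            have := h2' i t ht
            gcongr
        _ = 4 * a ^ 2 := by simp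
    have hcont : Continuous fun t => sqBessel4 γ t ω := by
      simp only [aux_sq_eq]
      exact continuous_finsetSum _ fun i _ => ((hγ.coord i).cont ω).pow 2
    have h3 : ∃ k < n, 1 ≤ sqBessel4 γ ((2 * k + 1 : ℕ) * (1/4000)) ω
      - sqBessel4 γ ((2 * k + 2 : ℕ) * (1/4000)) ω := by
      by_contra hne
      push Not at hne
      exact h1 hne
    obtain ⟨k, hk, hdrop⟩ := h3
    obtain ⟨hτ0, hτ⟩ := aux_dd_le (sqBessel4 γ) ω hcont _ _ (by positivity)
      (by gcongr; omega) hdrop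
    have hτT : ddTime 1 (sqBessel4 γ) ω ≤ T := by
      refine hτ.trans ?_
      have : ((2 * k + 2 : ℕ) : ℝ) ≤ 2 * n := by
        have : 2 * k + 2 ≤ 2 * n := by omega
        exact_mod_cast this
      rw [hT]
      linarith
    have hbound : ‖∫ s in (0:ℝ)..(ddTime 1 (sqBessel4 γ) ω), sqBessel4 γ s ω‖ ≤
        (4 * a ^ 2) * |ddTime 1 (sqBessel4 γ) ω - 0| := by
      apply intervalIntegral.norm_integral_le_of_norm_le_const
      intro x hx
      rw [uIoc_of_le hτ0] at hx
      rw [Real.norm_eq_abs, abs_of_nonneg (by rw [sqBessel4]; positivity)]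
      exact hU x ⟨hx.1.le, hx.2.trans hτT⟩
    rw [sub_zero, abs_of_nonneg hτ0] at hbound
    have h5 : b ≤ ∫ s in (0:ℝ)..(ddTime 1 (sqBessel4 γ) ω), sqBessel4 γ s ω := hω
    have h6 := (h5.trans (Real.le_norm_self _)).trans hbound
    have h7 : 4 * a ^ 2 * ddTime 1 (sqBessel4 γ) ω ≤ 4 * a ^ 2 * T := by gcongr
    have h8 : 4 * a ^ 2 * T = b / 2 := by rw [hasq]; field_simp; norm_num
    linarith
  calc _ ≤ _ := measure_mono hsub
    _ ≤ _ := measure_union_le _ _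
    _ ≤ ENNReal.ofReal ((1 - auxp) ^ n) +
        ∑ i : Fin 4, ENNReal.ofReal (4 * Real.exp (-(15625 * b / (n : ℝ) ^ 2))) := by
        refine add_le_add (aux_G_le P γ hγ n) ((measure_biUnion_finset_le _ _).trans ?_)
        refine Finset.sum_le_sum fun i _ => ?_
        have := aux_sup_tail P _ (hγ.coord i) T a hTpos hapos (by rw [hyeq]; exact hy)
        rw [hyeq] at this
        exact this
    _ = _ := by
        rw [Finset.sum_const, Finset.card_univ, Fintype.card_fin, nsmul_eq_mul,
          ENNReal.ofReal_add (by positivity) (by positivity)]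
        congr 1
        have : ((4 : ℕ) : ENNReal) = ENNReal.ofReal 4 := by simp
        rw [this, ← ENNReal.ofReal_mul (by norm_num)]
        congr 1
        ring

lemma auxp_pos : 0 < auxp := by rw [auxp]; positivity

lemma auxp_le : auxp ≤ 1 := by
  have : Real.exp (-40000) ≤ 1 := Real.exp_le_one_iff.2 (by norm_num)
  rw [auxp]; linarith

lemma aux_small : 16 * Real.exp (-62500) ≤ auxp / 2 := by
  have h1 : Real.exp (-62500) = Real.exp (-40000) * Real.exp (-22500) := by
    rw [← Real.exp_add]; norm_num
  have h2 : Real.exp (-22500) ≤ 1 / 512 := by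
    rw [Real.exp_neg, one_div]
    apply inv_anti₀ (by norm_num)
    linarith [Real.add_one_le_exp (22500 : ℝ)]
  have h3 : (0:ℝ) < Real.exp (-40000) := Real.exp_pos _
  rw [h1, auxp]
  nlinarith

end helpers

/-- there is `c > 0` such that `P{A(τ₁) ≥ b} ≤ exp(-c b^{1/5})` for all
`b ≥ 4`, where `A(t) := ∫₀^t U(s) ds` and `τ₁` is the unit drawdown time of the squared
four-dimensional Bessel process `U` started at `0`. -/
theorem sqBessel4_time_integral_at_drawdown_time_tail
    {Ω : Type*} [MeasurableSpace Ω] (P : Measure Ω) [IsProbabilityMeasure P]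
    (γ : ℝ → Ω → EuclideanSpace ℝ (Fin 4)) (hγ : IsStdBMVec 4 P γ) :
    ∃ c : ℝ, 0 < c ∧ ∀ b : ℝ, 4 ≤ b →
      P {ω | b ≤ ∫ s in (0:ℝ)..(ddTime 1 (sqBessel4 γ) ω), sqBessel4 γ s ω}
        ≤ ENNReal.ofReal (Real.exp (-c * b ^ ((1:ℝ)/5))) := by
  have hp := auxp_pos
  have hp1 := auxp_le
  have hL : 0 < Real.log 17 := Real.log_pos (by norm_num)
  set x₀ : ℝ := 2 * Real.log 17 / auxp with hx₀
  have hx₀pos : 0 < x₀ := by positivity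
  refine ⟨min (auxp / 2) (auxp / (2 * x₀)), by positivity, fun b hb => ?_⟩
  set c := min (auxp / 2) (auxp / (2 * x₀)) with hc
  set x : ℝ := b ^ ((1:ℝ)/5) with hx
  have hb0 : 0 ≤ b := by linarith
  have hx5 : x ^ 5 = b := by
    rw [hx, ← Real.rpow_natCast, ← Real.rpow_mul hb0]; norm_num
  have hx1 : 1 ≤ x := Real.one_le_rpow (by linarith) (by norm_num)
  rcases le_or_gt x x₀ with hle | hgt
  · -- moderate `b`
    refine (aux_main P γ hγ 1 le_rfl b hb (by norm_num; linarith)).trans ?_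
    apply ENNReal.ofReal_le_ofReal
    have h1 : Real.exp (-(15625 * b / ((1:ℕ) : ℝ) ^ 2)) ≤ Real.exp (-62500) := by
      apply Real.exp_le_exp.2
      norm_num
      linarith
    have h2 : 1 - auxp / 2 ≤ Real.exp (-(auxp / 2)) := by
      linarith [Real.add_one_le_exp (-(auxp / 2))]
    have h3 : Real.exp (-(auxp / 2)) ≤ Real.exp (-c * x) := by
      apply Real.exp_le_exp.2
      have : c * x ≤ auxp / (2 * x₀) * x₀ := by
        have := min_le_right (auxp / 2) (auxp / (2 * x₀))
        gcongr
      have e : auxp / (2 * x₀) * x₀ = auxp / 2 := by field_simp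
      linarith
    have := aux_small
    rw [pow_one]
    linarith
  · -- large `b`
    set n := ⌈x⌉₊ with hn
    have hn1 : x ≤ n := Nat.le_ceil x
    have hn2 : (n : ℝ) ≤ 2 * x := by
      have := Nat.ceil_lt_add_one (by linarith : 0 ≤ x)
      linarith
    have hnpos : (0:ℝ) < n := by linarith
    have hy : x ≤ 15625 * b / (n : ℝ) ^ 2 ∧ 12 ≤ 15625 * b / (n : ℝ) ^ 2 := by
      have h1 : 3000 * x ≤ 15625 * b / (n : ℝ) ^ 2 := by
        rw [le_div_iff₀ (by positivity), ← hx5]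
        have h2 : (n : ℝ) ^ 2 ≤ (2 * x) ^ 2 := by gcongr
        have h3 : x ^ 3 ≤ x ^ 5 := pow_le_pow_right₀ hx1 (by norm_num)
        have h4 := mul_le_mul_of_nonneg_left h2 (by linarith : 0 ≤ 3000 * x)
        have h5 : 3000 * x * (2 * x) ^ 2 = 12000 * x ^ 3 := by ring
        have h6 : 0 ≤ x ^ 3 := by positivity
        linarith
      constructor <;> linarith
    refine (aux_main P γ hγ n (by exact_mod_cast hnpos) b hb hy.2).trans ?_
    apply ENNReal.ofReal_le_ofReal
    have h1 : (1 - auxp) ^ n ≤ Real.exp (-(auxp * x)) := by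
      calc (1 - auxp) ^ n ≤ Real.exp (-auxp) ^ n := by
            have : 0 ≤ 1 - auxp := by linarith
            have := Real.add_one_le_exp (-auxp)
            gcongr
            linarith
        _ = Real.exp (n * (-auxp)) := (Real.exp_nat_mul _ _).symm
        _ ≤ _ := by
            apply Real.exp_le_exp.2
            nlinarith
    have h2 : Real.exp (-(15625 * b / (n : ℝ) ^ 2)) ≤ Real.exp (-(auxp * x)) := by
      apply Real.exp_le_exp.2
      nlinarith [hy.1]
    have h3 : (1 - auxp) ^ n + 16 * Real.exp (-(15625 * b / (n : ℝ) ^ 2)) ≤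
        17 * Real.exp (-(auxp * x)) := by linarith
    refine h3.trans ?_
    have h4 : (17:ℝ) = Real.exp (Real.log 17) := (Real.exp_log (by norm_num)).symm
    rw [h4, ← Real.exp_add]
    apply Real.exp_le_exp.2
    have h5 : 2 * Real.log 17 < x * auxp := by
      rw [hx₀, div_lt_iff₀ hp] at hgt
      exact hgt
    have h6 : c * x ≤ auxp / 2 * x := by
      have := min_le_left (auxp / 2) (auxp / (2 * x₀))
      gcongr
    linarith
end

section
/- Let U be a squared four-dimensional Bessel process started at 0. For every ε ∈ (0,1) there exists a constant c₁ = c₁(ε) > 0 such that for all a ≥ 1, P{ sup_{s ∈ [0,a]} U(s) < a^{1−ε} } ≤ exp(−c₁ a^{ε}). -/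
open MeasureTheory ProbabilityTheory Real Set Filter

open scoped ENNReal

/-- The standard Gaussian mass of `(-2, 2)` is less than one. -/
lemma gauss_mass_lt_one : gaussianReal 0 1 {x : ℝ | |x| < 2} < 1 := by
  have hm : MeasurableSet {x : ℝ | |x| < 2} := measurableSet_lt (by fun_prop) (by fun_prop)
  have hpos : 0 < gaussianReal 0 1 {x : ℝ | |x| < 2}ᶜ := by
    rw [pos_iff_ne_zero]
    intro h0
    have h1 := gaussianReal_absolutelyContinuous' 0 (v := 1) one_ne_zero h0
    have h2 : volume (Ioo (2:ℝ) 3) ≤ volume ({x : ℝ | |x| < 2}ᶜ) := by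
      apply measure_mono
      intro x hx
      simp only [mem_compl_iff, mem_ofPred_eq, not_lt]
      exact le_trans hx.1.le (le_abs_self x)
    rw [h1, Real.volume_Ioo] at h2
    norm_num at h2
  by_contra hcon
  have h1 : gaussianReal 0 1 {x : ℝ | |x| < 2} = 1 := le_antisymm prob_le_one (not_lt.1 hcon)
  rw [prob_compl_eq_one_sub hm, h1] at hpos
  simp at hpos

/-- Gaussian scaling. -/
lemma gauss_scale (L : ℝ) (hL : 0 < L) :
    gaussianReal 0 (Real.toNNReal (L ^ 2)) {x : ℝ | |x| < 2 * L}
      = gaussianReal 0 1 {x : ℝ | |x| < 2} := by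
  have h := gaussianReal_map_const_mul (μ := 0) (v := 1) L
  have he : NNReal.mk (L ^ 2) (sq_nonneg L) * 1 = Real.toNNReal (L ^ 2) := by
    rw [mul_one]
    exact (Real.toNNReal_of_nonneg (sq_nonneg L)).symm
  rw [mul_zero] at h
  rw [← he]
  rw [← h, Measure.map_apply (by fun_prop) (measurableSet_lt (by fun_prop) (by fun_prop))]
  congr 1
  ext x
  simp only [mem_preimage, mem_ofPred_eq, abs_mul, abs_of_pos hL]
  rw [mul_comm 2 L, mul_lt_mul_iff_right₀ hL]

/-- One-dimensional small ball bound. -/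
lemma bm_small_ball {Ω : Type*} [MeasurableSpace Ω] (P : Measure Ω)
    (B : ℝ → Ω → ℝ) (hB : IsStdBM P B) (L : ℝ) (hL : 0 < L) (n : ℕ) :
    P {ω | ∀ s ∈ Icc (0:ℝ) (n * L ^ 2), |B s ω| < L}
      ≤ (gaussianReal 0 1 {x : ℝ | |x| < 2}) ^ n := by
  have hm : MeasurableSet {x : ℝ | |x| < 2 * L} := measurableSet_lt (by fun_prop) (by fun_prop)
  let t : Fin (n + 1) → ℝ := fun i => (i : ℕ) * L ^ 2
  have ht0 : ∀ i, 0 ≤ t i := fun i => by positivity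
  have htm : Monotone t := fun i j hij => by
    have : ((i : ℕ) : ℝ) ≤ (j : ℕ) := by exact_mod_cast hij
    exact mul_le_mul_of_nonneg_right this (sq_nonneg L)
  have hind := hB.indep n t ht0 htm
  have hprod := hind.measure_inter_preimage_eq_mul Finset.univ
    (sets := fun _ => {x : ℝ | |x| < 2 * L}) (fun _ _ => hm)
  have hone : ∀ i : Fin n,
      P ((fun ω => B (t i.succ) ω - B (t i.castSucc) ω) ⁻¹' {x : ℝ | |x| < 2 * L})
        = gaussianReal 0 1 {x : ℝ | |x| < 2} := by
    intro i
    have hmeas : Measurable (fun ω => B (t i.succ) ω - B (t i.castSucc) ω) :=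
      (hB.measurable _).sub (hB.measurable _)
    rw [← Measure.map_apply hmeas hm,
      hB.gauss _ _ (ht0 _) (htm (Fin.castSucc_lt_succ (i := i)).le)]
    have : t i.succ - t i.castSucc = L ^ 2 := by
      simp only [t, Fin.val_succ, Fin.val_castSucc]
      push_cast
      ring
    rw [this, gauss_scale L hL]
  have hmem : ∀ i, t i ∈ Icc (0:ℝ) (n * L ^ 2) := fun i => by
    refine ⟨ht0 i, ?_⟩
    have : ((i : ℕ) : ℝ) ≤ n := by exact_mod_cast Nat.lt_succ_iff.1 i.2
    exact mul_le_mul_of_nonneg_right this (sq_nonneg L)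
  calc P {ω | ∀ s ∈ Icc (0:ℝ) (n * L ^ 2), |B s ω| < L}
      ≤ P (⋂ i ∈ (Finset.univ : Finset (Fin n)),
          (fun ω => B (t i.succ) ω - B (t i.castSucc) ω) ⁻¹' {x : ℝ | |x| < 2 * L}) := by
        apply measure_mono
        intro ω hω
        simp only [Finset.mem_univ, iInter_true, mem_iInter, mem_preimage, mem_ofPred_eq]
        intro i
        have h1 := hω _ (hmem i.succ)
        have h2 := hω _ (hmem i.castSucc)
        rw [abs_lt] at *
        constructor <;> linarith
    _ = _ := by
        rw [hprod]
        simp only [hone, Finset.prod_const, Finset.card_univ, Fintype.card_fin]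

/-- for every `ε ∈ (0,1)` there is `c₁ > 0` such that for all `a ≥ 1`,
`P{sup_{s ∈ [0,a]} U(s) < a^{1-ε}} ≤ exp(-c₁ a^ε)` for the squared four-dimensional
Bessel process `U` started at `0`. -/
theorem sqBessel4_small_ball
    {Ω : Type*} [MeasurableSpace Ω] (P : Measure Ω) [IsProbabilityMeasure P]
    (γ : ℝ → Ω → EuclideanSpace ℝ (Fin 4)) (hγ : IsStdBMVec 4 P γ)
    (ε : ℝ) (hε : ε ∈ Ioo (0:ℝ) 1) :
    ∃ c₁ : ℝ, 0 < c₁ ∧ ∀ a : ℝ, 1 ≤ a →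
      P {ω | runMax (sqBessel4 γ) a ω < a ^ (1 - ε)}
        ≤ ENNReal.ofReal (Real.exp (-c₁ * a ^ ε)) := by
  set q := gaussianReal 0 1 {x : ℝ | |x| < 2} with hq
  have hq1 : q < 1 := gauss_mass_lt_one
  have hqt : q ≠ ∞ := (hq1.trans ENNReal.one_lt_top).ne
  set r : ℝ := max q.toReal (1 / 2) with hr
  have hr0 : 0 < r := lt_of_lt_of_le (by norm_num) (le_max_right _ _)
  have hr1 : r < 1 := by
    refine max_lt ?_ (by norm_num)
    have := (ENNReal.toReal_lt_toReal hqt ENNReal.one_ne_top).2 hq1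
    simpa using this
  have hlog : Real.log r < 0 := Real.log_neg hr0 hr1
  refine ⟨-Real.log r / 2, by linarith, fun a ha => ?_⟩
  have ha0 : 0 < a := by linarith
  set L : ℝ := a ^ ((1 - ε) / 2) with hLdef
  have hL : 0 < L := Real.rpow_pos_of_pos ha0 _
  have hL2 : L ^ 2 = a ^ (1 - ε) := by
    rw [hLdef, ← Real.rpow_natCast, ← Real.rpow_mul ha0.le]
    congr 1
    push_cast
    ring
  set n : ℕ := ⌊a ^ ε⌋₊ with hn
  have hae : 1 ≤ a ^ ε := Real.one_le_rpow ha hε.1.le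
  have hn1 : (n : ℝ) ≤ a ^ ε := Nat.floor_le (by positivity)
  have hn2 : a ^ ε < n + 1 := Nat.lt_floor_add_one _
  have hn3 : (1 : ℝ) ≤ n := by exact_mod_cast (Nat.one_le_floor_iff _).2 hae
  have hna : n * L ^ 2 ≤ a := by
    calc n * L ^ 2 ≤ a ^ ε * a ^ (1 - ε) := by
          rw [hL2]
          exact mul_le_mul_of_nonneg_right hn1 (by positivity)
      _ = a := by
          rw [← Real.rpow_add ha0]
          simp
  calc P {ω | runMax (sqBessel4 γ) a ω < a ^ (1 - ε)}
      ≤ P {ω | ∀ s ∈ Icc (0:ℝ) (n * L ^ 2), |γ s ω 0| < L} := by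
        apply measure_mono
        intro ω hω s hs
        have hsa : s ∈ Icc (0:ℝ) a := ⟨hs.1, hs.2.trans hna⟩
        have hcont : Continuous fun t => sqBessel4 γ t ω := by
          have : (fun t => sqBessel4 γ t ω) = fun t => ∑ i, (γ t ω i) ^ 2 := by
            funext t
            simp [sqBessel4, EuclideanSpace.norm_sq_eq]
          rw [this]
          exact continuous_finsetSum _ fun i _ => ((hγ.coord i).cont ω).pow 2
        have hbdd : BddAbove (range fun s : Icc (0:ℝ) a => sqBessel4 γ s ω) := by
          have := (isCompact_Icc (a := (0:ℝ)) (b := a)).bddAbove_image hcont.continuousOn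
          rw [image_eq_range] at this
          exact this
        have h1 : sqBessel4 γ s ω ≤ runMax (sqBessel4 γ) a ω :=
          le_ciSup hbdd (⟨s, hsa⟩ : Icc (0:ℝ) a)
        have h2 : (γ s ω 0) ^ 2 ≤ sqBessel4 γ s ω := by
          have h3 := PiLp.norm_apply_le (γ s ω) 0
          rw [Real.norm_eq_abs] at h3
          rw [sqBessel4, ← sq_abs]
          exact pow_le_pow_left₀ (abs_nonneg _) h3 2
        have h4 : (γ s ω 0) ^ 2 < L ^ 2 := by
          rw [hL2]
          exact (h2.trans h1).trans_lt hω
        exact abs_lt_of_sq_lt_sq h4 hL.le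
    _ ≤ q ^ n := bm_small_ball P _ (hγ.coord 0) L hL n
    _ ≤ (ENNReal.ofReal r) ^ n := by
        gcongr
        exact ENNReal.le_ofReal_iff_toReal_le hqt hr0.le |>.2 (le_max_left _ _)
    _ = ENNReal.ofReal (Real.exp (n * Real.log r)) := by
        rw [← ENNReal.ofReal_pow hr0.le, Real.exp_nat_mul, Real.exp_log hr0]
    _ ≤ _ := by
        apply ENNReal.ofReal_le_ofReal
        apply Real.exp_le_exp.2
        nlinarith
end

section
/- Let U be a squared four-dimensional Bessel process started at 0 and τ₁^U := inf{ t ≥ 0 : Ū(t) − U(t) ≥ 1 } with Ū(t) := sup_{s ∈ [0,t]} U(s). For every ε ∈ (0,1) there exists a constant c₃ > 0 such that for all a ≥ 2, P{ sup_{s ∈ [0,a]} U(s) ≥ a^{1−ε} and τ₁^U > a } ≤ exp(−c₃ a^{1−ε}). -/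
open MeasureTheory ProbabilityTheory Real Set Filter

set_option linter.unusedSectionVars false

namespace SqBesselAux

open scoped ENNReal

/-- Two symmetric test intervals. -/
def J (b : Bool) : Set ℝ := if b then Icc 2 3 else Icc (-3) (-2)

lemma measurableSet_J (b : Bool) : MeasurableSet (J b) := by
  unfold J; split_ifs <;> exact measurableSet_Icc

lemma gauss_J_pos (b : Bool) : gaussianReal 0 1 (J b) ≠ 0 := by
  intro h
  have h2 := (gaussianReal_absolutelyContinuous' 0 (one_ne_zero : (1 : NNReal) ≠ 0)) h
  unfold J at h2
  split_ifs at h2 <;> norm_num [Real.volume_Icc] at h2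

/-- Lower bound for the Gaussian mass of the test intervals. -/
noncomputable def q : ℝ≥0∞ := min (gaussianReal 0 1 (J true)) (gaussianReal 0 1 (J false))

lemma q_le (b : Bool) : q ≤ gaussianReal 0 1 (J b) := by
  cases b
  · exact min_le_right _ _
  · exact min_le_left _ _

lemma q_ne_zero : q ≠ 0 := by
  unfold q
  rcases min_choice (gaussianReal 0 1 (J true)) (gaussianReal 0 1 (J false)) with h | h <;> rw [h] <;>
    exact gauss_J_pos _

lemma q_le_one : q ≤ 1 := (q_le true).trans prob_le_one

lemma arith (y z w : ℝ) (b : Bool) (hb : b = decide (0 ≤ y)) (hz : z ∈ J b) (hw : w ∈ J (!b)) :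
    1 ≤ (y + z) ^ 2 - (y + z + w) ^ 2 := by
  by_cases hy : 0 ≤ y
  · simp only [hy, decide_true] at hb
    subst hb
    simp only [J, Bool.not_true, if_true, Bool.false_eq_true, if_false, mem_Icc] at hz hw
    nlinarith [mul_nonneg (by linarith : 0 ≤ -2 - w) (by linarith : 0 ≤ 2 * (y + z) + w - 1)]
  · simp only [hy, decide_false] at hb
    subst hb
    simp only [J, Bool.not_false, if_true, Bool.false_eq_true, if_false, mem_Icc] at hz hw
    nlinarith [mul_nonneg (by linarith : 0 ≤ w - 2) (by linarith : 0 ≤ -(2 * (y + z) + w) - 1)]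

section

variable {Ω : Type*} [MeasurableSpace Ω] {P : Measure Ω} [IsProbabilityMeasure P]
  {γ : ℝ → Ω → EuclideanSpace ℝ (Fin 4)}

/-- Unit-time coordinate increments. -/
def xi (γ : ℝ → Ω → EuclideanSpace ℝ (Fin 4)) (p : Fin 4 × ℕ) (ω : Ω) : ℝ :=
  γ ((p.2 : ℝ) + 1) ω p.1 - γ (p.2 : ℝ) ω p.1

lemma xi_meas (hγ : IsStdBMVec 4 P γ) (p : Fin 4 × ℕ) : Measurable (xi γ p) :=
  ((hγ.coord p.1).measurable _).sub ((hγ.coord p.1).measurable _)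

lemma xi_map (hγ : IsStdBMVec 4 P γ) (p : Fin 4 × ℕ) :
    P.map (xi γ p) = gaussianReal 0 1 := by
  have := (hγ.coord p.1).gauss (p.2 : ℝ) ((p.2 : ℝ) + 1) (by positivity) (by linarith)
  rw [add_sub_cancel_left, Real.toNNReal_one] at this
  exact this

lemma xi_indep_coord (hγ : IsStdBMVec 4 P γ) (i : Fin 4) :
    iIndepFun (fun (j : ℕ) ω => xi γ (i, j) ω) P := by
  rw [iIndepFun_iff_finset]
  intro s
  obtain ⟨n, hn⟩ : ∃ n, ∀ x ∈ s, x < n :=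
    ⟨s.sup id + 1, fun x hx => Nat.lt_succ_of_le (Finset.le_sup (f := id) hx)⟩
  have h := (hγ.coord i).indep n (fun j => ((j : ℕ) : ℝ)) (fun j => by positivity)
    (fun a b hab => by simpa using hab)
  have h2 := h.precomp (g := fun x : s => (⟨x.1, hn x.1 x.2⟩ : Fin n))
    (fun a b hab => Subtype.ext (Fin.mk.inj_iff.1 hab))
  refine h2.congr (fun x => ?_)
  refine Filter.Eventually.of_forall fun ω => ?_
  simp [xi, Finset.restrict]

lemma xi_indep (hγ : IsStdBMVec 4 P γ) : iIndepFun (xi γ) P := by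
  refine iIndepFun_uncurry' (X := fun i j ω => xi γ (i, j) ω) (fun i j => xi_meas hγ _) ?_
    (xi_indep_coord hγ)
  exact hγ.indepCoord.comp (fun _ (f : ℝ → ℝ) (j : ℕ) => f ((j : ℝ) + 1) - f (j : ℝ))
    (fun _ => by fun_prop)

/-- The σ-algebra generated by increments with time index in `S`. -/
def sig (γ : ℝ → Ω → EuclideanSpace ℝ (Fin 4)) (S : Set (Fin 4 × ℕ)) : MeasurableSpace Ω :=
  ⨆ p ∈ S, MeasurableSpace.comap (xi γ p) inferInstance

lemma xi_sig {S : Set (Fin 4 × ℕ)} {p : Fin 4 × ℕ} (hp : p ∈ S) : Measurable[sig γ S] (xi γ p) := by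
  have h : Measurable[MeasurableSpace.comap (xi γ p) inferInstance] (xi γ p) :=
    comap_measurable _
  exact h.mono (le_iSup₂_of_le p hp le_rfl) le_rfl

lemma sig_le (hγ : IsStdBMVec 4 P γ) (S : Set (Fin 4 × ℕ)) : sig γ S ≤ ‹MeasurableSpace Ω› :=
  iSup₂_le fun p _ => (xi_meas hγ p).comap_le

lemma indep_sig (hγ : IsStdBMVec 4 P γ) {S T : Set (Fin 4 × ℕ)} (h : Disjoint S T) :
    Indep (sig γ S) (sig γ T) P :=
  indep_iSup_of_disjoint (fun p => (xi_meas hγ p).comap_le) (xi_indep hγ) h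

lemma coord_sig (hγ : IsStdBMVec 4 P γ) (n m : ℕ) (hm : m ≤ n) (i : Fin 4) :
    Measurable[sig γ {p | p.2 < n}] (fun ω => γ (m : ℝ) ω i) := by
  induction m with
  | zero =>
    have : (fun ω => γ ((0 : ℕ) : ℝ) ω i) = fun _ => 0 := by
      funext ω; simpa using (hγ.coord i).start ω
    rw [this]; exact measurable_const
  | succ m ih =>
    have h1 := ih (by omega)
    have h2 : Measurable[sig γ {p | p.2 < n}] (xi γ (i, m)) := xi_sig (by simp; omega)
    have : (fun ω => γ ((m + 1 : ℕ) : ℝ) ω i) = fun ω => γ (m : ℝ) ω i + xi γ (i, m) ω := by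
      funext ω; simp [xi]
    rw [this]
    exact Measurable.add h1 h2

/-- Event of no unit drop between the times `2j+1` and `2j+2`, for `j < k`. -/
def A (γ : ℝ → Ω → EuclideanSpace ℝ (Fin 4)) (k : ℕ) : Set Ω :=
  {ω | ∀ j < k, ∑ i, (γ ((2 * j + 1 : ℕ) : ℝ) ω i) ^ 2 - ∑ i, (γ ((2 * j + 2 : ℕ) : ℝ) ω i) ^ 2 < 1}

lemma A_meas (hγ : IsStdBMVec 4 P γ) (k : ℕ) :
    MeasurableSet[sig γ {p | p.2 < 2 * k}] (A γ k) := by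
  have : A γ k = ⋂ j : Fin k, {ω | ∑ i, (γ ((2 * j.1 + 1 : ℕ) : ℝ) ω i) ^ 2
      - ∑ i, (γ ((2 * j.1 + 2 : ℕ) : ℝ) ω i) ^ 2 < 1} := by
    ext ω; simp [A, Fin.forall_iff]
  rw [this]
  refine MeasurableSet.iInter fun j => ?_
  have h1 := fun i => coord_sig hγ (2 * k) (2 * j.1 + 1) (by omega) i
  have h2 := fun i => coord_sig hγ (2 * k) (2 * j.1 + 2) (by omega) i
  refine measurableSet_lt (Measurable.sub ?_ ?_) measurable_const
  · exact Finset.measurable_sum _ fun i _ => (h1 i).pow_const 2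
  · exact Finset.measurable_sum _ fun i _ => (h2 i).pow_const 2

/-- Sign pattern at time `2k`. -/
noncomputable def sgn (γ : ℝ → Ω → EuclideanSpace ℝ (Fin 4)) (k : ℕ) (ω : Ω) : Fin 4 → Bool :=
  fun i => decide (0 ≤ γ ((2 * k : ℕ) : ℝ) ω i)

lemma sgn_meas (hγ : IsStdBMVec 4 P γ) (k : ℕ) (s : Fin 4 → Bool) :
    MeasurableSet[sig γ {p | p.2 < 2 * k}] {ω | sgn γ k ω = s} := by
  have : {ω | sgn γ k ω = s} = ⋂ i, {ω | decide (0 ≤ γ ((2 * k : ℕ) : ℝ) ω i) = s i} := by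
    ext ω; simp [sgn, funext_iff]
  rw [this]
  refine MeasurableSet.iInter fun i => ?_
  have h := coord_sig hγ (2 * k) (2 * k) le_rfl i
  cases hs : s i
  · simp only [decide_eq_false_iff_not, not_le]
    exact measurableSet_lt h measurable_const
  · simp only [decide_eq_true_eq]
    exact measurableSet_le measurable_const h

/-- Favourable increments for the sign pattern `s`. -/
def G (γ : ℝ → Ω → EuclideanSpace ℝ (Fin 4)) (k : ℕ) (s : Fin 4 → Bool) : Set Ω :=
  ⋂ p ∈ (Finset.univ ×ˢ {2 * k, 2 * k + 1} : Finset (Fin 4 × ℕ)),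
    xi γ p ⁻¹' J (if p.2 = 2 * k then s p.1 else !(s p.1))

lemma G_meas (k : ℕ) (s : Fin 4 → Bool) :
    MeasurableSet[sig γ {p | 2 * k ≤ p.2}] (G γ k s) := by
  refine Finset.measurableSet_biInter _ fun p hp => ?_
  have h : Measurable[sig γ {p | 2 * k ≤ p.2}] (xi γ p) := by
    refine xi_sig ?_
    simp at hp ⊢
    omega
  exact h (measurableSet_J _)

lemma G_prob (hγ : IsStdBMVec 4 P γ) (k : ℕ) (s : Fin 4 → Bool) : q ^ 8 ≤ P (G γ k s) := by
  unfold G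
  rw [(xi_indep hγ).measure_inter_preimage_eq_mul
    (Finset.univ ×ˢ {2 * k, 2 * k + 1} : Finset (Fin 4 × ℕ))
    (sets := fun p => J (if p.2 = 2 * k then s p.1 else !(s p.1)))
    (fun p _ => measurableSet_J _)]
  have hcard : (Finset.univ ×ˢ {2 * k, 2 * k + 1} : Finset (Fin 4 × ℕ)).card = 8 := by
    rw [Finset.card_product, Finset.card_pair (by omega)]; simp
  rw [← hcard, ← Finset.prod_const]
  refine Finset.prod_le_prod' fun p _ => ?_
  rw [← Measure.map_apply (xi_meas hγ p) (measurableSet_J _), xi_map hγ]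
  exact q_le _

lemma G_sub (k : ℕ) (s : Fin 4 → Bool) {ω : Ω} (hs : sgn γ k ω = s) (hG : ω ∈ G γ k s) :
    ω ∉ A γ (k + 1) := by
  intro hA
  have h := hA k (by omega)
  rw [← Finset.sum_sub_distrib] at h
  have h2 : ∀ i : Fin 4, 1 ≤ (γ ((2 * k + 1 : ℕ) : ℝ) ω i) ^ 2 - (γ ((2 * k + 2 : ℕ) : ℝ) ω i) ^ 2 := by
    intro i
    simp only [G, mem_iInter, mem_preimage] at hG
    have g1 := hG (i, 2 * k) (by simp)
    have g2 := hG (i, 2 * k + 1) (by simp)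
    simp only [if_true, Nat.succ_ne_self, if_false] at g1 g2
    have := arith (γ ((2 * k : ℕ) : ℝ) ω i) _ _ (s i) (by rw [← hs]; rfl) g1 g2
    have e1 : γ ((2 * k : ℕ) : ℝ) ω i + xi γ (i, 2 * k) ω = γ ((2 * k + 1 : ℕ) : ℝ) ω i := by
      simp [xi]
    have e2 : γ ((2 * k + 1 : ℕ) : ℝ) ω i + xi γ (i, 2 * k + 1) ω
        = γ ((2 * k + 2 : ℕ) : ℝ) ω i := by
      have : ((2 * k + 1 : ℕ) : ℝ) + 1 = ((2 * k + 2 : ℕ) : ℝ) := by push_cast; ring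
      simp only [xi, this]; ring
    rw [e1, e2] at this
    exact this
  rw [Fin.sum_univ_four] at h
  linarith [h2 0, h2 1, h2 2, h2 3]

lemma A_anti (k : ℕ) : A γ (k + 1) ⊆ A γ k := fun _ h j hj => h j (by omega)

lemma A_step (hγ : IsStdBMVec 4 P γ) (k : ℕ) :
    P (A γ (k + 1)) + P (A γ k) * q ^ 8 ≤ P (A γ k) := by
  have hle := sig_le hγ {p | p.2 < 2 * k}
  have hle2 := sig_le hγ {p | 2 * k ≤ p.2}
  have hdisj : Disjoint {p : Fin 4 × ℕ | p.2 < 2 * k} {p | 2 * k ≤ p.2} := by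
    rw [Set.disjoint_left]; intro p h1 h2; simp at h1 h2; omega
  have hind := (Indep_iff _ _ _).1 (indep_sig hγ hdisj)
  set B : (Fin 4 → Bool) → Set Ω := fun s => A γ k ∩ {ω | sgn γ k ω = s} with hB
  have hBm : ∀ s, MeasurableSet[sig γ {p | p.2 < 2 * k}] (B s) := fun s =>
    (A_meas hγ k).inter (sgn_meas hγ k s)
  have hdB : Pairwise (Function.onFun Disjoint B) := by
    intro s t hst
    refine Set.disjoint_left.2 fun ω h1 h2 => hst ?_
    exact h1.2.symm.trans h2.2
  have hU : ⋃ s, B s = A γ k := by ext ω; simp [hB]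
  have hsum : P (A γ k) = ∑ s, P (B s) := by
    rw [← hU, measure_iUnion hdB (fun s => hle _ (hBm s)), tsum_fintype]
  have hsum2 : P (⋃ s, B s ∩ G γ k s) = ∑ s, P (B s ∩ G γ k s) := by
    rw [measure_iUnion (fun s t hst => (hdB hst).mono inter_subset_left inter_subset_left)
      (fun s => (hle _ (hBm s)).inter (hle2 _ (G_meas k s))), tsum_fintype]
  have h1 : P (A γ k) * q ^ 8 ≤ P (⋃ s, B s ∩ G γ k s) := by
    rw [hsum2, hsum, Finset.sum_mul]
    refine Finset.sum_le_sum fun s _ => ?_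
    rw [hind _ _ (hBm s) (G_meas k s)]
    gcongr
    exact G_prob hγ k s
  calc P (A γ (k + 1)) + P (A γ k) * q ^ 8
      ≤ P (A γ (k + 1)) + P (⋃ s, B s ∩ G γ k s) := by gcongr
    _ = P (A γ (k + 1) ∪ ⋃ s, B s ∩ G γ k s) := by
        refine (measure_union ?_ (MeasurableSet.iUnion fun s =>
          (hle _ (hBm s)).inter (hle2 _ (G_meas k s)))).symm
        refine Set.disjoint_left.2 fun ω h1 h2 => ?_
        obtain ⟨s, hs⟩ := mem_iUnion.1 h2
        exact G_sub k s hs.1.2 hs.2 h1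
    _ ≤ P (A γ k) := by
        refine measure_mono (union_subset (A_anti k) (iUnion_subset fun s => ?_))
        exact fun ω h => h.1.1

lemma A_bound (hγ : IsStdBMVec 4 P γ) (k : ℕ) :
    P.real (A γ k) ≤ Real.exp (-((q ^ 8).toReal * k)) := by
  induction k with
  | zero => simpa using measureReal_le_one
  | succ k ih =>
    have h := ENNReal.toReal_mono (measure_ne_top P _) (A_step hγ k)
    have hq : q ^ 8 ≠ ⊤ := ENNReal.pow_ne_top (ne_top_of_le_ne_top ENNReal.one_ne_top q_le_one)
    rw [ENNReal.toReal_add (measure_ne_top P _) (ENNReal.mul_ne_top (measure_ne_top P _) hq),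
      ENNReal.toReal_mul] at h
    change P.real _ + P.real _ * _ ≤ P.real _ at h
    set r := (q ^ 8).toReal
    have hr := Real.add_one_le_exp (-r)
    calc P.real (A γ (k + 1)) ≤ P.real (A γ k) * (-r + 1) := by linarith
      _ ≤ P.real (A γ k) * Real.exp (-r) := by gcongr
      _ ≤ Real.exp (-(r * k)) * Real.exp (-r) := by gcongr
      _ = Real.exp (-(r * (k + 1 : ℕ))) := by rw [← Real.exp_add]; push_cast; ring_nf

lemma event_sub (hγ : IsStdBMVec 4 P γ) (a : ℝ) (k : ℕ) (hk : 2 * (k : ℝ) ≤ a) (ω : Ω)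
    (h : a < ddTime 1 (sqBessel4 γ) ω) : ω ∈ A γ k := by
  intro j hj
  by_contra! hc
  have hcont : Continuous fun t => sqBessel4 γ t ω := by
    have : (fun t => sqBessel4 γ t ω) = fun t => ∑ i, (γ t ω i) ^ 2 := by
      funext t; simp [sqBessel4, EuclideanSpace.norm_sq_eq]
    rw [this]
    exact continuous_finsetSum _ fun i _ => ((hγ.coord i).cont ω).pow 2
  have hjk : ((j : ℝ) + 1) ≤ k := by exact_mod_cast hj
  have hbdd : BddAbove (range fun s : Icc (0:ℝ) ((2 * j + 2 : ℕ) : ℝ) => sqBessel4 γ s ω) := by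
    have := (isCompact_Icc (a := (0:ℝ)) (b := ((2 * j + 2 : ℕ) : ℝ))).bddAbove_image
      hcont.continuousOn
    rwa [Set.image_eq_range] at this
  have h1 : sqBessel4 γ ((2 * j + 1 : ℕ) : ℝ) ω ≤ runMax (sqBessel4 γ) ((2 * j + 2 : ℕ) : ℝ) ω :=
    le_ciSup hbdd ⟨((2 * j + 1 : ℕ) : ℝ), by positivity, by push_cast; linarith⟩
  have h2 : ddTime 1 (sqBessel4 γ) ω ≤ ((2 * j + 2 : ℕ) : ℝ) := by
    refine csInf_le ⟨0, fun t ht => ht.1⟩ ⟨by positivity, ?_⟩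
    have e : ∀ t, sqBessel4 γ t ω = ∑ i, (γ t ω i) ^ 2 := by
      intro t; simp [sqBessel4, EuclideanSpace.norm_sq_eq]
    rw [← e, ← e] at hc
    linarith
  push_cast at h2
  linarith

end

end SqBesselAux

open scoped ENNReal

/-- for every `ε ∈ (0,1)` there is `c₃ > 0` such that for all `a ≥ 2`,
`P{sup_{s ∈ [0,a]} U(s) ≥ a^{1-ε}, τ₁ > a} ≤ exp(-c₃ a^{1-ε})` for the squared
four-dimensional Bessel process `U` started at `0` with unit drawdown time `τ₁`. -/
theorem sqBessel4_large_sup_long_drawdown_tail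
    {Ω : Type*} [MeasurableSpace Ω] (P : Measure Ω) [IsProbabilityMeasure P]
    (γ : ℝ → Ω → EuclideanSpace ℝ (Fin 4)) (hγ : IsStdBMVec 4 P γ)
    (ε : ℝ) (hε : ε ∈ Ioo (0:ℝ) 1) :
    ∃ c₃ : ℝ, 0 < c₃ ∧ ∀ a : ℝ, 2 ≤ a →
      P {ω | a ^ (1 - ε) ≤ runMax (sqBessel4 γ) a ω ∧ a < ddTime 1 (sqBessel4 γ) ω}
        ≤ ENNReal.ofReal (Real.exp (-c₃ * a ^ (1 - ε))) := by
  obtain ⟨hε0, hε1⟩ := hε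
  have hq0 : 0 < (SqBesselAux.q ^ 8).toReal := by
    refine ENNReal.toReal_pos (pow_ne_zero _ SqBesselAux.q_ne_zero) (ENNReal.pow_ne_top ?_)
    exact ne_top_of_le_ne_top ENNReal.one_ne_top SqBesselAux.q_le_one
  refine ⟨(SqBesselAux.q ^ 8).toReal / 4, by positivity, fun a ha => ?_⟩
  set r := (SqBesselAux.q ^ 8).toReal
  have hk1 : (⌊a / 2⌋₊ : ℝ) ≤ a / 2 := Nat.floor_le (by linarith)
  have hk2 : a / 2 < (⌊a / 2⌋₊ : ℝ) + 1 := Nat.lt_floor_add_one _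
  have hk3 : (1 : ℝ) ≤ (⌊a / 2⌋₊ : ℝ) := by
    have : 1 ≤ ⌊a / 2⌋₊ := Nat.le_floor (by push_cast; linarith)
    exact_mod_cast this
  have hpow : a ^ (1 - ε) ≤ a := by
    calc a ^ (1 - ε) ≤ a ^ (1 : ℝ) :=
          Real.rpow_le_rpow_of_exponent_le (by linarith) (by linarith)
      _ = a := Real.rpow_one a
  calc P {ω | a ^ (1 - ε) ≤ runMax (sqBessel4 γ) a ω ∧ a < ddTime 1 (sqBessel4 γ) ω}
      ≤ P (SqBesselAux.A γ ⌊a / 2⌋₊) := measure_mono fun ω hω =>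
        SqBesselAux.event_sub hγ a _ (by linarith) ω hω.2
    _ = ENNReal.ofReal (P.real (SqBesselAux.A γ ⌊a / 2⌋₊)) := by
        rw [measureReal_def, ENNReal.ofReal_toReal (measure_ne_top P _)]
    _ ≤ ENNReal.ofReal (Real.exp (-(r / 4) * a ^ (1 - ε))) := by
        refine ENNReal.ofReal_le_ofReal ((SqBesselAux.A_bound hγ _).trans ?_)
        refine Real.exp_le_exp.2 ?_
        have h4 : a ^ (1 - ε) ≤ 4 * (⌊a / 2⌋₊ : ℝ) := by linarith
        change -(r * _) ≤ _
        nlinarith [mul_le_mul_of_nonneg_left h4 hq0.le]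
end

section
/- Let U be a squared four-dimensional Bessel process started at 0 and A(t) := ∫₀^t U(s) ds. There exists a constant c₅ > 0 such that for all a > 0 and all b ≥ a², P{ A(a) ≥ b } ≤ exp(−c₅ b / a²). -/
open MeasureTheory ProbabilityTheory Real Set Filter

open scoped ENNReal

section helpers

variable {Ω : Type*} [MeasurableSpace Ω]

lemma stdBM_law {P : Measure Ω} {B : ℝ → Ω → ℝ} (hB : IsStdBM P B) {s : ℝ} (hs : 0 ≤ s) :
    P.map (B s) = gaussianReal 0 s.toNNReal := by
  have h := hB.gauss 0 s le_rfl hs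
  simpa [hB.start] using h

lemma gaussianReal_scale (s : ℝ) (hs : 0 ≤ s) :
    gaussianReal 0 s.toNNReal = (gaussianReal 0 1).map (fun x => √s * x) := by
  rw [gaussianReal_map_const_mul]
  congr 1
  · simp
  · ext
    simp [hs]

lemma gaussian_exp_quarter :
    ∫⁻ x, ENNReal.ofReal (Real.exp (x ^ 2 / 4)) ∂(gaussianReal 0 1) ≤ 2 := by
  rw [gaussianReal_of_var_ne_zero 0 one_ne_zero,
    lintegral_withDensity_eq_lintegral_mul _ (measurable_gaussianPDF 0 1) (by fun_prop)]
  have h1 : ∀ x : ℝ, (gaussianPDF 0 1 * fun x : ℝ => ENNReal.ofReal (Real.exp (x ^ 2 / 4))) x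
      = ENNReal.ofReal ((√(2 * π))⁻¹ * Real.exp (-(1/4) * x ^ 2)) := by
    intro x
    simp only [Pi.mul_apply, gaussianPDF, gaussianPDFReal]
    rw [← ENNReal.ofReal_mul (by positivity), mul_assoc, ← Real.exp_add]
    congr 1
    simp only [sub_zero, NNReal.coe_one, mul_one]
    congr 2
    ring
  simp_rw [h1]
  rw [← ofReal_integral_eq_lintegral_ofReal]
  · rw [integral_const_mul, integral_gaussian]
    have : (√(2 * π))⁻¹ * √(π / (1 / 4)) = √2 := by
      rw [show π / (1/4) = 2 * (2 * π) by ring, Real.sqrt_mul (by norm_num) (2 * π)]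
      have : √(2 * π) ≠ 0 := by positivity
      field_simp
    rw [this]
    have h2 : √2 ≤ 2 := by
      rw [Real.sqrt_le_left (by norm_num)]; norm_num
    calc ENNReal.ofReal √2 ≤ ENNReal.ofReal 2 := ENNReal.ofReal_le_ofReal h2
      _ = 2 := by simp
  · exact (integrable_exp_neg_mul_sq (by norm_num)).const_mul _
  · exact Eventually.of_forall fun x => by positivity

lemma stdBM_exp {P : Measure Ω} {B : ℝ → Ω → ℝ} (hB : IsStdBM P B) {a s : ℝ} (ha : 0 < a)
    (hs : 0 ≤ s) (hsa : s ≤ a) :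
    ∫⁻ ω, ENNReal.ofReal (Real.exp (B s ω ^ 2 / (4 * a))) ∂P ≤ 2 := by
  have h0 : ∫⁻ ω, ENNReal.ofReal (Real.exp (B s ω ^ 2 / (4 * a))) ∂P =
      ∫⁻ x, ENNReal.ofReal (Real.exp (x ^ 2 / (4 * a))) ∂(P.map (B s)) := by
    rw [lintegral_map (by fun_prop) (hB.measurable s)]
  rw [h0, stdBM_law hB hs, gaussianReal_scale s hs, lintegral_map (by fun_prop) (by fun_prop)]
  refine le_trans (lintegral_mono fun x => ?_) gaussian_exp_quarter
  apply ENNReal.ofReal_le_ofReal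
  apply Real.exp_le_exp.mpr
  rw [mul_pow, Real.sq_sqrt hs, div_le_div_iff₀ (by positivity) (by norm_num)]
  nlinarith [mul_le_mul_of_nonneg_right hsa (sq_nonneg x)]

lemma stdBM_small {P : Measure Ω} {B : ℝ → Ω → ℝ} (hB : IsStdBM P B) {a : ℝ} (ha : 0 < a) :
    P {ω | B a ω ^ 2 ≤ a / 400} = gaussianReal 0 1 {x | x ^ 2 ≤ 1 / 400} := by
  have hm : MeasurableSet {x : ℝ | x ^ 2 ≤ a / 400} :=
    measurableSet_le (by fun_prop) (by fun_prop)
  have h0 : P {ω | B a ω ^ 2 ≤ a / 400} = P.map (B a) {x | x ^ 2 ≤ a / 400} := by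
    rw [Measure.map_apply (hB.measurable a) hm]; rfl
  rw [h0, stdBM_law hB ha.le, gaussianReal_scale a ha.le,
    Measure.map_apply (by fun_prop) hm]
  congr 1
  ext x
  simp only [mem_preimage, mem_ofPred_eq, mul_pow, Real.sq_sqrt ha.le]
  rw [show a / 400 = a * (1/400) by ring, mul_le_mul_iff_right₀ ha]

lemma gaussian_small_pos : 0 < gaussianReal 0 1 {x : ℝ | x ^ 2 ≤ 1 / 400} := by
  rw [pos_iff_ne_zero]
  intro h
  have h1 := gaussianReal_absolutelyContinuous' 0 (one_ne_zero) h
  have h2 : Icc (0:ℝ) (1/20) ⊆ {x : ℝ | x ^ 2 ≤ 1 / 400} := by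
    intro x hx
    simp only [mem_ofPred_eq]
    nlinarith [hx.1, hx.2]
  have h3 := measure_mono_null h2 h1
  rw [Real.volume_Icc] at h3
  norm_num at h3

lemma stdBM_bridge {P : Measure Ω} [IsProbabilityMeasure P] {B : ℝ → Ω → ℝ} (hB : IsStdBM P B)
    {a s : ℝ} (ha : 0 < a) (hs : 0 ≤ s) (hsa : s ≤ a) :
    ∫⁻ ω, ENNReal.ofReal (B s ω ^ 2) * {x : ℝ | x ^ 2 ≤ a / 400}.indicator 1 (B a ω) ∂P ≤
      ENNReal.ofReal (5 / 4 * (s * (a - s) / a) + a / 80) * P {ω | B a ω ^ 2 ≤ a / 400} := by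
  have hm : MeasurableSet {x : ℝ | x ^ 2 ≤ a / 400} :=
    measurableSet_le (by fun_prop) (by fun_prop)
  have mBs := hB.measurable s
  have mBa := hB.measurable a
  let X : Ω → ℝ := B s
  let Y : Ω → ℝ := fun ω => B a ω - B s ω
  have mX : Measurable X := hB.measurable s
  have mY : Measurable Y := by fun_prop
  have lX : HasLaw X (gaussianReal 0 s.toNNReal) P := ⟨mX.aemeasurable, stdBM_law hB hs⟩
  have lY : HasLaw Y (gaussianReal 0 (a - s).toNNReal) P :=
    ⟨mY.aemeasurable, hB.gauss s a hs hsa⟩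
  have gX : HasGaussianLaw X P := lX.hasGaussianLaw
  have gY : HasGaussianLaw Y P := lY.hasGaussianLaw
  have hXY : IndepFun X Y P := by
    have h := hB.indep 2 ![0, s, a] (by intro i; fin_cases i <;> simp [hs, ha.le])
      (by
        rw [Fin.monotone_iff_le_succ]
        intro i; fin_cases i <;> simp [hs, hsa])
    have h2 := h.indepFun (i := 0) (j := 1) (by decide)
    simpa [hB.start] using h2
  have gXY := hXY.hasGaussianLaw gX gY
  have vX : Var[X; P] = s := by
    rw [lX.variance_eq, variance_id_gaussianReal]; simp [hs]
  have vY : Var[Y; P] = a - s := by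
    rw [lY.variance_eq, variance_id_gaussianReal]; simp [hsa]
  have eX : P[X] = 0 := by
    rw [lX.integral_eq]; simp
  have eY : P[Y] = 0 := by
    rw [lY.integral_eq]; simp
  have cXY : cov[X, Y; P] = 0 := hXY.covariance_eq_zero gX.memLp_two gY.memLp_two
  let β : Ω → ℝ := fun ω => ((a - s) / a) * X ω - (s / a) * Y ω
  let Z : Ω → ℝ := fun ω => X ω + Y ω
  have gβZ : HasGaussianLaw (fun ω => (β ω, Z ω)) P := by
    have := gXY.map_fun ((((a - s) / a) • ContinuousLinearMap.fst ℝ ℝ ℝ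
      - (s / a) • ContinuousLinearMap.snd ℝ ℝ ℝ).prod
      (ContinuousLinearMap.fst ℝ ℝ ℝ + ContinuousLinearMap.snd ℝ ℝ ℝ))
    simpa [β, Z] using this
  have m1 : MemLp (fun ω => ((a - s) / a) * X ω) 2 P := gX.memLp_two.const_mul _
  have m2 : MemLp (fun ω => (s / a) * Y ω) 2 P := gY.memLp_two.const_mul _
  have hind : IndepFun β Z P := by
    apply gβZ.indepFun_of_covariance_eq_zero
    have e1 : cov[β, Z; P] = cov[fun ω => ((a - s) / a) * X ω, Z; P]
        - cov[fun ω => (s / a) * Y ω, Z; P] :=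
      covariance_fun_sub_left m1 m2 (gX.memLp_two.add gY.memLp_two)
    rw [e1, covariance_const_mul_left, covariance_const_mul_left]
    have e2 : cov[X, Z; P] = cov[X, X; P] + cov[X, Y; P] :=
      covariance_add_right gX.memLp_two gX.memLp_two gY.memLp_two
    have e3 : cov[Y, Z; P] = cov[Y, X; P] + cov[Y, Y; P] :=
      covariance_add_right gY.memLp_two gX.memLp_two gY.memLp_two
    rw [e2, e3, covariance_self mX.aemeasurable, covariance_self mY.aemeasurable,
      covariance_comm Y X, cXY, vX, vY]
    field_simp
    ring
  have mβ : Measurable β := by fun_prop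
  have hβ2 : ∫⁻ ω, ENNReal.ofReal (β ω ^ 2) ∂P = ENNReal.ofReal (s * (a - s) / a) := by
    rw [← ofReal_integral_eq_lintegral_ofReal]
    · congr 1
      have e0 : P[β] = 0 := by
        have : P[β] = ((a - s) / a) * P[X] - (s / a) * P[Y] := by
          rw [← integral_const_mul, ← integral_const_mul]
          exact integral_sub (gX.integrable.const_mul _) (gY.integrable.const_mul _)
        rw [this, eX, eY]; simp
      rw [← variance_of_integral_eq_zero mβ.aemeasurable e0]
      have : Var[β; P] = Var[fun ω => ((a - s) / a) * X ω; P]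
          + Var[fun ω => (s / a) * Y ω; P] := by
        have e := variance_fun_sub m1 m2
        rw [covariance_const_mul_left, covariance_const_mul_right, cXY] at e
        simpa [β] using e
      rw [this, variance_const_mul, variance_const_mul, vX, vY]
      field_simp
      ring
    · exact gβZ.fst.memLp_two.integrable_sq
    · exact Eventually.of_forall fun ω => sq_nonneg _
  have hZ : ∀ ω, Z ω = B a ω := fun ω => by simp [Z, X, Y]
  set S : Set ℝ := {x : ℝ | x ^ 2 ≤ a / 400} with hS
  have hind2 : ∫⁻ ω, ENNReal.ofReal (β ω ^ 2) * S.indicator 1 (B a ω) ∂P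
      = ENNReal.ofReal (s * (a - s) / a) * P {ω | B a ω ^ 2 ≤ a / 400} := by
    have hc : IndepFun (fun ω => ENNReal.ofReal (β ω ^ 2))
        (fun ω => S.indicator (1 : ℝ → ℝ≥0∞) (B a ω)) P := by
      have := hind.comp (φ := fun x => ENNReal.ofReal (x ^ 2))
        (ψ := S.indicator (1 : ℝ → ℝ≥0∞)) (by fun_prop) (measurable_one.indicator hm)
      simpa [Function.comp_def, hZ] using this
    have mI : Measurable fun ω => S.indicator (1 : ℝ → ℝ≥0∞) (B a ω) :=
      (measurable_one.indicator hm).comp mBa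
    rw [lintegral_mul_eq_lintegral_mul_lintegral_of_indepFun'' (by fun_prop)
      mI.aemeasurable hc, hβ2]
    congr 1
    rw [← lintegral_map (f := S.indicator (1 : ℝ → ℝ≥0∞)) (measurable_one.indicator hm) mBa,
      lintegral_indicator_one hm, Measure.map_apply mBa hm]
    rfl
  have hpt : ∀ ω, ENNReal.ofReal (B s ω ^ 2) * S.indicator 1 (B a ω) ≤
      ENNReal.ofReal (5 / 4) * (ENNReal.ofReal (β ω ^ 2) * S.indicator 1 (B a ω)) +
      ENNReal.ofReal (a / 80) * S.indicator 1 (B a ω) := by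
    intro ω
    by_cases hω : B a ω ∈ S
    · simp only [Set.indicator_of_mem hω, Pi.one_apply, mul_one]
      rw [← ENNReal.ofReal_mul (by norm_num), ← ENNReal.ofReal_add (by positivity) (by positivity)]
      apply ENNReal.ofReal_le_ofReal
      have e : B s ω = β ω + (s / a) * B a ω := by
        simp only [β, X, Y]; field_simp; ring
      have h1 : B a ω ^ 2 ≤ a / 400 := hω
      have h2 : ((s / a) * B a ω) ^ 2 ≤ a / 400 := by
        have h3 : (s / a) ^ 2 ≤ 1 := by
          have : s / a ≤ 1 := (div_le_one ha).mpr hsa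
          have : 0 ≤ s / a := by positivity
          nlinarith
        rw [mul_pow]
        nlinarith [sq_nonneg (B a ω)]
      rw [e]
      set u := β ω
      set v := (s / a) * B a ω
      nlinarith [sq_nonneg (u - 4 * v)]
    · simp [Set.indicator_of_notMem hω]
  calc _ ≤ ∫⁻ ω, (ENNReal.ofReal (5 / 4) * (ENNReal.ofReal (β ω ^ 2) * S.indicator 1 (B a ω)) +
      ENNReal.ofReal (a / 80) * S.indicator 1 (B a ω)) ∂P := lintegral_mono hpt
    _ = ENNReal.ofReal (5 / 4) * (ENNReal.ofReal (s * (a - s) / a) * P {ω | B a ω ^ 2 ≤ a / 400})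
        + ENNReal.ofReal (a / 80) * P {ω | B a ω ^ 2 ≤ a / 400} := by
      have mI : Measurable fun ω => S.indicator (1 : ℝ → ℝ≥0∞) (B a ω) :=
        (measurable_one.indicator hm).comp mBa
      rw [lintegral_add_left (by fun_prop), lintegral_const_mul _ (by fun_prop), hind2,
        lintegral_const_mul _ mI,
        ← lintegral_map (f := S.indicator (1 : ℝ → ℝ≥0∞)) (measurable_one.indicator hm) mBa,
        lintegral_indicator_one hm, Measure.map_apply mBa hm]
      rfl
    _ = _ := by
      have : 0 ≤ s * (a - s) / a := div_nonneg (mul_nonneg hs (by linarith)) ha.le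
      rw [ENNReal.ofReal_add (by positivity) (by positivity),
        ENNReal.ofReal_mul (by norm_num)]
      ring

lemma joint_meas {P : Measure Ω} {γ : ℝ → Ω → EuclideanSpace ℝ (Fin 4)}
    (hγ : IsStdBMVec 4 P γ) (i : Fin 4) : Measurable fun p : ℝ × Ω => γ p.1 p.2 i :=
  measurable_uncurry_of_continuous_of_measurable (u := fun t ω => γ t ω i)
    (hγ.coord i).cont (hγ.coord i).measurable

lemma sqBessel4_eq (γ : ℝ → Ω → EuclideanSpace ℝ (Fin 4)) (s : ℝ) (ω : Ω) :
    sqBessel4 γ s ω = ∑ i, γ s ω i ^ 2 := by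
  simp [sqBessel4, EuclideanSpace.norm_sq_eq]

lemma sqBessel4_cont {P : Measure Ω} {γ : ℝ → Ω → EuclideanSpace ℝ (Fin 4)}
    (hγ : IsStdBMVec 4 P γ) (ω : Ω) : Continuous fun s => sqBessel4 γ s ω := by
  simp_rw [sqBessel4_eq]
  exact continuous_finsetSum _ fun i _ => ((hγ.coord i).cont ω).pow 2

lemma exp_pt {P : Measure Ω} {γ : ℝ → Ω → EuclideanSpace ℝ (Fin 4)}
    (hγ : IsStdBMVec 4 P γ) {a : ℝ} (ha : 0 < a) (ω : Ω) :
    ENNReal.ofReal (Real.exp ((∫ s in (0:ℝ)..a, sqBessel4 γ s ω) / (16 * a ^ 2))) ≤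
      ENNReal.ofReal a⁻¹ * ∫⁻ s in Ioc 0 a, ∑ i,
        ENNReal.ofReal (1 / 4) * ENNReal.ofReal (Real.exp (γ s ω i ^ 2 / (4 * a))) := by
  have hc := sqBessel4_cont hγ ω
  have hcf : Continuous fun s => sqBessel4 γ s ω / (16 * a) := hc.div_const _
  have hce : Continuous fun s => Real.exp (sqBessel4 γ s ω / (16 * a)) := hcf.rexp
  have hI : IntegrableOn (fun s => Real.exp (sqBessel4 γ s ω / (16 * a))) (Ioc 0 a) volume :=
    (hce.integrableOn_Icc (a := 0) (b := a)).mono_set Ioc_subset_Icc_self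
  have hJ := convexOn_exp.map_set_average_le (μ := volume) (t := Ioc 0 a)
    (f := fun s => sqBessel4 γ s ω / (16 * a)) Real.continuous_exp.continuousOn isClosed_univ
    (by simp [ha]) (by simp) (by simp)
    ((hcf.integrableOn_Icc (a := 0) (b := a)).mono_set Ioc_subset_Icc_self) hI
  have hv : volume.real (Ioc 0 a) = a := by simp [Measure.real, ha.le]
  rw [setAverage_eq, setAverage_eq, hv, integral_div, smul_eq_mul, smul_eq_mul] at hJ
  have h1 : (∫ s in (0:ℝ)..a, sqBessel4 γ s ω) / (16 * a ^ 2) =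
      a⁻¹ * ((∫ s in Ioc 0 a, sqBessel4 γ s ω) / (16 * a)) := by
    rw [intervalIntegral.integral_of_le ha.le]
    field_simp
  rw [h1]
  refine (ENNReal.ofReal_le_ofReal hJ).trans ?_
  rw [ENNReal.ofReal_mul (by positivity),
    ofReal_integral_eq_lintegral_ofReal hI (Eventually.of_forall fun s => (Real.exp_pos _).le)]
  gcongr with s
  simp_rw [← ENNReal.ofReal_mul (show (0:ℝ) ≤ 1 / 4 by norm_num)]
  rw [← ENNReal.ofReal_sum_of_nonneg (fun i _ => by positivity)]
  apply ENNReal.ofReal_le_ofReal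
  have := convexOn_exp.map_sum_le (t := Finset.univ) (w := fun _ : Fin 4 => (1/4 : ℝ))
    (p := fun i => γ s ω i ^ 2 / (4 * a)) (by intros; norm_num) (by simp) (by simp)
  simp only [smul_eq_mul] at this
  refine le_trans (le_of_eq ?_) this
  rw [sqBessel4_eq, Finset.sum_div]
  congr 1
  apply Finset.sum_congr rfl
  intro i _
  field_simp
  norm_num

lemma exp_tail {P : Measure Ω} [IsProbabilityMeasure P]
    {γ : ℝ → Ω → EuclideanSpace ℝ (Fin 4)}
    (hγ : IsStdBMVec 4 P γ) {a : ℝ} (ha : 0 < a) (b : ℝ) :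
    P {ω | b ≤ ∫ s in (0:ℝ)..a, sqBessel4 γ s ω} ≤
      ENNReal.ofReal (2 * Real.exp (-(b / (16 * a ^ 2)))) := by
  let f : ℝ → Ω → ℝ≥0∞ := fun s ω => ∑ i,
        ENNReal.ofReal (1 / 4) * ENNReal.ofReal (Real.exp (γ s ω i ^ 2 / (4 * a)))
  have hf : Measurable (Function.uncurry f) := by
    refine Finset.measurable_fun_sum _ fun i _ => ?_
    exact (((joint_meas hγ i).pow_const 2).div_const (4 * a)).exp.ennreal_ofReal.const_mul _
  let F : Ω → ℝ≥0∞ := fun ω => ENNReal.ofReal a⁻¹ * ∫⁻ s in Ioc 0 a, f s ω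
  have hF : Measurable F := (hf.lintegral_prod_left).const_mul _
  have hFi : ∫⁻ ω, F ω ∂P ≤ 2 := by
    simp only [F]
    rw [lintegral_const_mul _ hf.lintegral_prod_left, ← lintegral_lintegral_swap hf.aemeasurable]
    have : ∀ s ∈ Ioc 0 a, ∫⁻ ω, f s ω ∂P ≤ 2 := by
      intro s hs
      simp only [f]
      have hm : ∀ i, Measurable (fun ω => γ s ω i) := fun i => (hγ.coord i).measurable s
      have hm2 : ∀ i, Measurable fun ω => ENNReal.ofReal (Real.exp (γ s ω i ^ 2 / (4 * a))) :=
        fun i => (((hm i).pow_const 2).div_const (4 * a)).exp.ennreal_ofReal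
      rw [lintegral_finsetSum _ (fun i _ => (hm2 i).const_mul _)]
      calc _ ≤ ∑ i : Fin 4, ENNReal.ofReal (1 / 4) * 2 := by
            apply Finset.sum_le_sum
            intro i _
            rw [lintegral_const_mul _ (hm2 i)]
            gcongr
            exact stdBM_exp (hγ.coord i) ha hs.1.le hs.2
        _ = 2 := by
            rw [show (2 : ℝ≥0∞) = ENNReal.ofReal 2 by simp]
            rw [← ENNReal.ofReal_mul (by norm_num)]
            rw [← ENNReal.ofReal_sum_of_nonneg (fun i _ => by positivity)]
            norm_num
    calc _ ≤ ENNReal.ofReal a⁻¹ * ∫⁻ s in Ioc 0 a, 2 := by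
          exact mul_le_mul_right (setLIntegral_mono measurable_const this) _
      _ = 2 := by
          rw [setLIntegral_const, Real.volume_Ioc, sub_zero, mul_comm 2, ← mul_assoc,
            ← ENNReal.ofReal_mul (by positivity), inv_mul_cancel₀ ha.ne']
          simp
  have hsub : {ω | b ≤ ∫ s in (0:ℝ)..a, sqBessel4 γ s ω} ⊆
      {ω | ENNReal.ofReal (Real.exp (b / (16 * a ^ 2))) ≤ F ω} := by
    intro ω hω
    refine le_trans (ENNReal.ofReal_le_ofReal ?_) (exp_pt hγ ha ω)
    apply Real.exp_le_exp.mpr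
    have : b ≤ ∫ s in (0:ℝ)..a, sqBessel4 γ s ω := hω
    gcongr
  refine (measure_mono hsub).trans ?_
  refine (meas_ge_le_lintegral_div hF.aemeasurable (by simp [Real.exp_pos]) (by simp)).trans ?_
  refine (ENNReal.div_le_div_right hFi _).trans ?_
  rw [show (2 : ℝ≥0∞) = ENNReal.ofReal 2 by simp, ← ENNReal.ofReal_div_of_pos (Real.exp_pos _),
    Real.exp_neg, div_eq_mul_inv]

/-- the weight of the event that the endpoint is close to the origin -/
noncomputable def endW (γ : ℝ → Ω → EuclideanSpace ℝ (Fin 4)) (a : ℝ) (ω : Ω) : ℝ≥0∞ :=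
  ∏ j, {x : ℝ | x ^ 2 ≤ a / 400}.indicator 1 (γ a ω j)

lemma endW_meas {P : Measure Ω} {γ : ℝ → Ω → EuclideanSpace ℝ (Fin 4)}
    (hγ : IsStdBMVec 4 P γ) (a : ℝ) : Measurable (endW γ a) := by
  have hm : MeasurableSet {x : ℝ | x ^ 2 ≤ a / 400} :=
    measurableSet_le (by fun_prop) (by fun_prop)
  unfold endW
  exact Finset.measurable_fun_prod _ fun j _ =>
    (measurable_one.indicator hm).comp ((hγ.coord j).measurable a)

lemma endW_le (γ : ℝ → Ω → EuclideanSpace ℝ (Fin 4)) (a : ℝ) (ω : Ω) : endW γ a ω ≤ 1 := by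
  unfold endW
  apply Finset.prod_le_one'
  intro j _
  exact Set.indicator_le_self' (by simp) _

lemma endW_prod {P : Measure Ω} [IsProbabilityMeasure P]
    {γ : ℝ → Ω → EuclideanSpace ℝ (Fin 4)}
    (hγ : IsStdBMVec 4 P γ) {a : ℝ} (u : Fin 4 → (ℝ → ℝ) → ℝ≥0∞) (hu : ∀ i, Measurable (u i)) :
    ∫⁻ ω, (∏ j, u j (fun t => γ t ω j)) * endW γ a ω ∂P =
      ∏ j, ∫⁻ ω, u j (fun t => γ t ω j)
        * {x : ℝ | x ^ 2 ≤ a / 400}.indicator 1 (γ a ω j) ∂P := by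
  have hm : MeasurableSet {x : ℝ | x ^ 2 ≤ a / 400} :=
    measurableSet_le (by fun_prop) (by fun_prop)
  have hI : Measurable ({x : ℝ | x ^ 2 ≤ a / 400}.indicator (1 : ℝ → ℝ≥0∞)) :=
    measurable_one.indicator hm
  let g : Fin 4 → (ℝ → ℝ) → ℝ≥0∞ := fun j f =>
    u j f * {x : ℝ | x ^ 2 ≤ a / 400}.indicator 1 (f a)
  have hg : ∀ j, Measurable (g j) := fun j =>
    (hu j).mul (hI.comp (measurable_pi_apply a))
  have hind := hγ.indepCoord.comp g hg
  have hmp : ∀ j, Measurable (fun ω => fun t : ℝ => γ t ω j) := fun j =>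
    measurable_pi_lambda _ fun t => (hγ.coord j).measurable t
  have := lintegral_prod_eq_prod_lintegral_of_indepFun Finset.univ _ hind
    (fun j => (hg j).comp (hmp j))
  simp only [Function.comp_def, g] at this
  rw [← this]
  simp_rw [endW, Finset.prod_mul_distrib]

lemma indicator_int {P : Measure Ω} {B : ℝ → Ω → ℝ} (hB : IsStdBM P B) {a : ℝ} (ha : 0 < a) :
    ∫⁻ ω, {x : ℝ | x ^ 2 ≤ a / 400}.indicator 1 (B a ω) ∂P =
      gaussianReal 0 1 {x : ℝ | x ^ 2 ≤ 1 / 400} := by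
  have hm : MeasurableSet {x : ℝ | x ^ 2 ≤ a / 400} :=
    measurableSet_le (by fun_prop) (by fun_prop)
  rw [← lintegral_map (f := Set.indicator _ (1 : ℝ → ℝ≥0∞)) (measurable_one.indicator hm)
    (hB.measurable a), lintegral_indicator_one hm, Measure.map_apply (hB.measurable a) hm,
    ← stdBM_small hB ha]
  rfl

lemma endW_int {P : Measure Ω} [IsProbabilityMeasure P]
    {γ : ℝ → Ω → EuclideanSpace ℝ (Fin 4)}
    (hγ : IsStdBMVec 4 P γ) {a : ℝ} (ha : 0 < a) :
    ∫⁻ ω, endW γ a ω ∂P = gaussianReal 0 1 {x : ℝ | x ^ 2 ≤ 1 / 400} ^ 4 := by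
  have h := endW_prod hγ (a := a) (fun _ _ => 1) (fun _ => measurable_const)
  simp only [Finset.prod_const_one, one_mul] at h
  rw [h]
  have : ∀ j, ∫⁻ ω, {x : ℝ | x ^ 2 ≤ a / 400}.indicator 1 (γ a ω j) ∂P =
      gaussianReal 0 1 {x : ℝ | x ^ 2 ≤ 1 / 400} := fun j => indicator_int (hγ.coord j) ha
  rw [Finset.prod_congr rfl (fun j _ => this j)]
  simp

lemma endW_sq {P : Measure Ω} [IsProbabilityMeasure P]
    {γ : ℝ → Ω → EuclideanSpace ℝ (Fin 4)}
    (hγ : IsStdBMVec 4 P γ) {a s : ℝ} (ha : 0 < a) (hs : 0 ≤ s) (hsa : s ≤ a) (i : Fin 4) :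
    ∫⁻ ω, ENNReal.ofReal (γ s ω i ^ 2) * endW γ a ω ∂P ≤
      ENNReal.ofReal (5 / 4 * (s * (a - s) / a) + a / 80)
        * gaussianReal 0 1 {x : ℝ | x ^ 2 ≤ 1 / 400} ^ 4 := by
  set p := gaussianReal 0 1 {x : ℝ | x ^ 2 ≤ 1 / 400} with hp
  set κ := ENNReal.ofReal (5 / 4 * (s * (a - s) / a) + a / 80) with hκ
  have h := endW_prod hγ (a := a)
    (fun j f => if j = i then ENNReal.ofReal (f s ^ 2) else 1)
    (fun j => by
      by_cases hj : j = i
      · simp only [hj, if_true]; fun_prop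
      · simp only [hj, if_false]; fun_prop)
  simp only [Finset.prod_ite_eq', Finset.mem_univ, if_true] at h
  rw [h]
  calc _ ≤ ∏ j : Fin 4, ((if j = i then κ else 1) * p) := by
        apply Finset.prod_le_prod'
        intro j _
        by_cases hj : j = i
        · subst hj
          simp only [if_true]
          rw [hp, ← stdBM_small (hγ.coord j) ha]
          exact stdBM_bridge (hγ.coord j) ha hs hsa
        · simp only [hj, if_false, one_mul]
          exact (indicator_int (hγ.coord j) ha).le
    _ = κ * p ^ 4 := by
        rw [Finset.prod_mul_distrib]
        simp

lemma quad_int {a : ℝ} (ha : 0 < a) :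
    ∫ s in (0:ℝ)..a, (4 * (5 / 4 * (s * (a - s) / a) + a / 80)) = 53 / 60 * a ^ 2 := by
  have h : ∀ s ∈ Set.uIcc 0 a, HasDerivAt
      (fun s : ℝ => 5 / 2 * s ^ 2 - 5 / 3 * s ^ 3 / a + a / 20 * s)
      (4 * (5 / 4 * (s * (a - s) / a) + a / 80)) s := by
    intro s _
    have := (((hasDerivAt_pow 2 s).const_mul (5/2)).sub
      (((hasDerivAt_pow 3 s).const_mul (5/3)).div_const a)).add ((hasDerivAt_id s).const_mul (a/20))
    convert! this using 1
    simp
    field_simp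
    ring
  rw [intervalIntegral.integral_eq_sub_of_hasDerivAt h
    (Continuous.intervalIntegrable (by fun_prop) _ _)]
  field_simp
  ring

set_option maxHeartbeats 1000000 in
lemma small_ball {P : Measure Ω} [IsProbabilityMeasure P]
    {γ : ℝ → Ω → EuclideanSpace ℝ (Fin 4)}
    (hγ : IsStdBMVec 4 P γ) {a : ℝ} (ha : 0 < a) :
    P {ω | a ^ 2 ≤ ∫ s in (0:ℝ)..a, sqBessel4 γ s ω} +
      gaussianReal 0 1 {x : ℝ | x ^ 2 ≤ 1 / 400} ^ 4 ≤ 1 +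
      ENNReal.ofReal (53 / 60) * gaussianReal 0 1 {x : ℝ | x ^ 2 ≤ 1 / 400} ^ 4 := by
  set p := gaussianReal 0 1 {x : ℝ | x ^ 2 ≤ 1 / 400} with hp
  let f : ℝ → Ω → ℝ≥0∞ := fun s ω => ∑ i, ENNReal.ofReal (γ s ω i ^ 2)
  have hf : Measurable (Function.uncurry f) := by
    refine Finset.measurable_fun_sum _ fun i _ => ?_
    exact ((joint_meas hγ i).pow_const 2).ennreal_ofReal
  have hW := endW_meas hγ a
  let F : Ω → ℝ≥0∞ := fun ω => ∫⁻ s in Ioc 0 a, f s ω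
  have hF : Measurable F := hf.lintegral_prod_left
  have hFe : ∀ ω, ENNReal.ofReal (∫ s in (0:ℝ)..a, sqBessel4 γ s ω) = F ω := by
    intro ω
    rw [intervalIntegral.integral_of_le ha.le, ofReal_integral_eq_lintegral_ofReal
      (((sqBessel4_cont hγ ω).integrableOn_Icc (a := 0) (b := a)).mono_set Ioc_subset_Icc_self)
      (Eventually.of_forall fun s => by simp only [sqBessel4]; positivity)]
    simp only [F, f]
    congr 1
    funext s
    rw [sqBessel4_eq, ENNReal.ofReal_sum_of_nonneg (fun i _ => by positivity)]
  have hset : {ω | a ^ 2 ≤ ∫ s in (0:ℝ)..a, sqBessel4 γ s ω} =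
      {ω | ENNReal.ofReal (a ^ 2) ≤ F ω} := by
    ext ω
    simp only [mem_ofPred_eq]
    rw [← hFe ω, ENNReal.ofReal_le_ofReal_iff]
    exact intervalIntegral.integral_nonneg ha.le fun s _ => by simp only [sqBessel4]; positivity
  rw [hset]
  set E := {ω | ENNReal.ofReal (a ^ 2) ≤ F ω} with hE
  have mE : MeasurableSet E := measurableSet_le measurable_const hF
  have hFW : ∫⁻ ω, F ω * endW γ a ω ∂P ≤ ENNReal.ofReal (53 / 60 * a ^ 2) * p ^ 4 := by
    have hfW : Measurable (Function.uncurry fun s ω => f s ω * endW γ a ω) :=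
      hf.mul (hW.comp measurable_snd)
    have e1 : ∀ ω, F ω * endW γ a ω = ∫⁻ s in Ioc 0 a, f s ω * endW γ a ω := by
      intro ω
      have hms : Measurable fun s => f s ω := hf.of_uncurry_right
      rw [lintegral_mul_const _ hms]
    simp_rw [e1]
    rw [← lintegral_lintegral_swap hfW.aemeasurable]
    calc _ ≤ ∫⁻ s in Ioc 0 a,
          ENNReal.ofReal (4 * (5 / 4 * (s * (a - s) / a) + a / 80)) * p ^ 4 := by
          refine setLIntegral_mono (by fun_prop) ?_
          intro s hs
          have hm : ∀ i, Measurable (fun ω => γ s ω i) := fun i => (hγ.coord i).measurable s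
          simp only [f, Finset.sum_mul]
          have hm2 : ∀ i, Measurable fun ω => ENNReal.ofReal (γ s ω i ^ 2) * endW γ a ω :=
            fun i => ((hm i).pow_const 2).ennreal_ofReal.mul hW
          rw [lintegral_finsetSum _ (fun i _ => hm2 i)]
          refine (Finset.sum_le_sum fun i _ => endW_sq hγ ha hs.1.le hs.2 i).trans ?_
          rw [ENNReal.ofReal_mul (by norm_num)]
          simp [mul_assoc, hp]
      _ = _ := by
          rw [lintegral_mul_const _ (by fun_prop), ← ofReal_integral_eq_lintegral_ofReal,
            ← intervalIntegral.integral_of_le ha.le, quad_int ha]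
          · exact (Continuous.integrableOn_Icc (by fun_prop)).mono_set Ioc_subset_Icc_self
          · refine (ae_restrict_mem measurableSet_Ioc).mono fun s hs => ?_
            have : 0 ≤ s * (a - s) / a :=
              div_nonneg (mul_nonneg hs.1.le (by linarith [hs.2])) ha.le
            simp only [Pi.zero_apply]
            positivity
  have hpt : ∀ ω, E.indicator 1 ω + endW γ a ω ≤
      1 + ENNReal.ofReal (a ^ 2)⁻¹ * (F ω * endW γ a ω) := by
    intro ω
    by_cases hω : ω ∈ E
    · simp only [Set.indicator_of_mem hω, Pi.one_apply]
      gcongr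
      have h1 : ENNReal.ofReal (a ^ 2) ≤ F ω := hω
      calc endW γ a ω = ENNReal.ofReal (a ^ 2)⁻¹ * (ENNReal.ofReal (a ^ 2) * endW γ a ω) := by
            rw [← mul_assoc, ← ENNReal.ofReal_mul (by positivity),
              inv_mul_cancel₀ (by positivity)]
            simp
        _ ≤ _ := by gcongr
    · simp only [Set.indicator_of_notMem hω, zero_add]
      exact (endW_le γ a ω).trans le_self_add
  have h := lintegral_mono (μ := P) hpt
  have mFW : Measurable fun ω => F ω * endW γ a ω := hF.mul hW
  rw [lintegral_add_right _ hW, lintegral_indicator_one mE, endW_int hγ ha,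
    lintegral_add_left measurable_const, lintegral_const_mul _ mFW] at h
  simp only [lintegral_const, measure_univ, mul_one] at h
  refine h.trans (add_le_add_right ?_ 1)
  calc _ ≤ ENNReal.ofReal (a ^ 2)⁻¹ * (ENNReal.ofReal (53 / 60 * a ^ 2) * p ^ 4) := by gcongr
    _ = _ := by
      rw [← mul_assoc, ← ENNReal.ofReal_mul (by positivity)]
      congr 2
      field_simp

end helpers

/-- there is `c₅ > 0` such that for all `a > 0` and `b ≥ a²`,
`P{A(a) ≥ b} ≤ exp(-c₅ b / a²)`, where `A(t) := ∫₀^t U(s) ds` for the squared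
four-dimensional Bessel process `U` started at `0`. -/
theorem sqBessel4_time_integral_tail
    {Ω : Type*} [MeasurableSpace Ω] (P : Measure Ω) [IsProbabilityMeasure P]
    (γ : ℝ → Ω → EuclideanSpace ℝ (Fin 4)) (hγ : IsStdBMVec 4 P γ) :
    ∃ c₅ : ℝ, 0 < c₅ ∧ ∀ a : ℝ, 0 < a → ∀ b : ℝ, a ^ 2 ≤ b →
      P {ω | b ≤ ∫ s in (0:ℝ)..a, sqBessel4 γ s ω}
        ≤ ENNReal.ofReal (Real.exp (-c₅ * b / a ^ 2)) := by
  obtain ⟨q, hq0, hq1, hq⟩ : ∃ q : ℝ, 0 < q ∧ q ≤ 1 ∧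
      gaussianReal 0 1 {x : ℝ | x ^ 2 ≤ 1 / 400} ^ 4 = ENNReal.ofReal q := by
    have h1 : gaussianReal 0 1 {x : ℝ | x ^ 2 ≤ 1 / 400} ^ 4 ≤ 1 := pow_le_one' prob_le_one 4
    have h2 := ne_top_of_le_ne_top ENNReal.one_ne_top h1
    refine ⟨_, ENNReal.toReal_pos (pow_ne_zero 4 gaussian_small_pos.ne') h2, ?_,
      (ENNReal.ofReal_toReal h2).symm⟩
    simpa using ENNReal.toReal_mono ENNReal.one_ne_top h1
  refine ⟨q / 320, by positivity, fun a ha b hb => ?_⟩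
  have ha2 : 0 < a ^ 2 := by positivity
  obtain ⟨r, hr⟩ : ∃ r, r = b / a ^ 2 := ⟨_, rfl⟩
  have hr1 : 1 ≤ r := by rw [hr, le_div_iff₀ ha2]; linarith
  have e0 : -(q / 320) * b / a ^ 2 = -(q / 320 * r) := by rw [hr]; ring
  rw [e0]
  by_cases hbig : 32 ≤ r
  · refine (exp_tail hγ ha b).trans (ENNReal.ofReal_le_ofReal ?_)
    have e1 : b / (16 * a ^ 2) = r / 16 := by rw [hr]; field_simp
    rw [e1]
    have h2 : (2:ℝ) ≤ Real.exp 1 := by linarith [Real.add_one_le_exp (1:ℝ)]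
    calc 2 * Real.exp (-(r / 16)) ≤ Real.exp 1 * Real.exp (-(r / 16)) := by gcongr
      _ = Real.exp (1 + -(r / 16)) := by rw [Real.exp_add]
      _ ≤ _ := by
        apply Real.exp_le_exp.mpr
        nlinarith
  · have h := small_ball hγ ha
    rw [hq, ← ENNReal.ofReal_mul (by norm_num)] at h
    have hmono : P {ω | b ≤ ∫ s in (0:ℝ)..a, sqBessel4 γ s ω} ≤
        P {ω | a ^ 2 ≤ ∫ s in (0:ℝ)..a, sqBessel4 γ s ω} :=
      measure_mono fun ω hω => hb.trans hω
    refine hmono.trans ?_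
    have h3 : P {ω | a ^ 2 ≤ ∫ s in (0:ℝ)..a, sqBessel4 γ s ω} ≤ ENNReal.ofReal (1 - q / 10) := by
      rw [← ENNReal.ofReal_one, ← ENNReal.ofReal_add (by norm_num) (by positivity)] at h
      have h4 := ENNReal.le_sub_of_add_le_right ENNReal.ofReal_ne_top h
      rw [← ENNReal.ofReal_sub _ hq0.le] at h4
      exact h4.trans (ENNReal.ofReal_le_ofReal (by linarith))
    refine h3.trans (ENNReal.ofReal_le_ofReal ?_)
    have h5 := Real.add_one_le_exp (-(q / 320 * r))
    push Not at hbig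
    nlinarith
end
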